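/- Let 0<s<1. There exists a constant C*=C*(s)>0 such that: (i) for every Ω satisfying (H) with Ω(π/2)=1 and Ω(θ)≥1+C*·|θ−π/2|² for all θ∈[0,π], the measure ρ_{1D} is the unique minimizer of E up to translation; (ii) for every ω satisfying (h) and every constant c_ω>0 with ω(θ)≥c_ω·|θ−π/2|² for all θ∈[0,π], there exists a unique α*∈(0, C*/c_ω] such that for every α>α*, ρ_{1D} is the unique minimizer of E_α up to translation, and for every α with 0<α<α*, ρ_{1D} is not a minimizer of E_α. -/

import Mathlib

/-!
The constant is `C* = 16 / (1 - s)`.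

*One dimension.* The potential of `(ρ² - t²)^{(s-1)/2}` on `(-ρ, ρ)` for the kernel `|t|^{-s}` is
constant inside the interval and at most that constant outside (`eqPot_inside`, `eqPot_le`; a Möbius
substitution reduces it to a Beta integral). Integrating over the radius `ρ` gives the potential of
`(R² - t²)^{(1+s)/2}`, hence the Euler–Lagrange conditions of `ρ₁` (`pot_inside`, `pot_outside`). Since
`|t|^{-s}` is, up to a constant, the autocorrelation of `t₊^{-(1+s)/2}`, the interaction energy `II` is
an `L²` norm squared, and Abel inversion makes it definite (`II_cross_le`, `eq_of_II`). Together these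
show that `ρ₁` is the unique one-dimensional minimizer up to translation (`FF_min`).

*Strong coercivity.* The one-dimensional potential `|τ|^{-s} + τ²`, evaluated at `τ = x₂ + u x₁` and
averaged over `|u| ≤ 1/2`, is bounded by `W(x) - (11/12) x₁²` as soon as
`Ω ≥ 1 + C* |θ - π/2|²` on `[0, π]` (`kernel_le`, `WL_le`). Each average is the one-dimensional
interaction of a projection of the measure, so `FF_min` bounds the energy from below by that of
`ρ_{1D}` plus a penalty on the horizontal spread (`energy_ge`), which gives `strong_coercive`.

*Threshold.* `E_α` is nondecreasing in `α` and does not depend on `α` at `ρ_{1D}`, so minimality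
persists as `α` grows and becomes uniqueness (`family_mono`). For small `α` minimality fails:
splitting `ρ_{1D}` into two vertical lines at distance `δ` gains at least a multiple of `δ^{1-s}` in
the isotropic repulsion at a quadratic cost of order `δ²` (`exists_gain`, `small_alpha`). Then `α*`
is the infimum of the parameters for which `ρ_{1D}` is a minimizer.
-/

open MeasureTheory Real Filter Set Topology
open scoped ENNReal

noncomputable section

namespace Aniso

/-- The Euclidean norm on `ℝ × ℝ`. -/
def nrm (x : ℝ × ℝ) : ℝ := Real.sqrt (x.1 ^ 2 + x.2 ^ 2)

/-- The angle `θ(x) ∈ [-π, π)` of a nonzero point `x ∈ ℝ²`,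
so that `x / |x| = (cos (ang x), sin (ang x))`. -/
def ang (x : ℝ × ℝ) : ℝ :=
  if Complex.arg ⟨x.1, x.2⟩ = π then -π else Complex.arg ⟨x.1, x.2⟩

/-- The unit vector `e_φ = (cos φ, sin φ)`. -/
def eVec (φ : ℝ) : ℝ × ℝ := (Real.cos φ, Real.sin φ)

/-- The constant `τ_s = (2π)^{-s} Γ(s) cos(sπ/2)`. -/
def tauC (s : ℝ) : ℝ := (2 * π) ^ (-s) * Real.Gamma s * Real.cos (s * π / 2)

/-- The constant `c_s = π^{s-1} Γ((2-s)/2) / Γ(s/2)`. -/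
def cC (s : ℝ) : ℝ := π ^ (s - 1) * Real.Gamma ((2 - s) / 2) / Real.Gamma (s / 2)

/-- Hypothesis (H): `Ω` is smooth, 2π-periodic, strictly positive and π-periodic. -/
def SatisfiesH (Ω : ℝ → ℝ) : Prop :=
  ContDiff ℝ (⊤ : ℕ∞) Ω ∧ (∀ θ, Ω (θ + 2 * π) = Ω θ) ∧ (∀ θ, 0 < Ω θ) ∧ ∀ θ, Ω (θ + π) = Ω θ

/-- Hypothesis (h): `ω` is smooth, 2π-periodic, nonnegative, not identically zero,
π-periodic, and `ω(π/2) = 0`. -/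
def Satisfiesh (ω : ℝ → ℝ) : Prop :=
  ContDiff ℝ (⊤ : ℕ∞) ω ∧ (∀ θ, ω (θ + 2 * π) = ω θ) ∧ (∀ θ, 0 ≤ ω θ) ∧ (∃ θ, ω θ ≠ 0) ∧
    (∀ θ, ω (θ + π) = ω θ) ∧ ω (π / 2) = 0

/-- The transformed angle function `Ω̃`. -/
def Omt (s : ℝ) (Ω : ℝ → ℝ) (φ : ℝ) : ℝ :=
  tauC (2 - s) * (∫ θ in (-π)..π, |Real.cos (φ - θ)| ^ (-2 + s) * (Ω θ - Ω (φ + π / 2)))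
    + cC s * Ω (φ + π / 2)

/-- The interaction potential `W(x) = |x|^{-s} Ω(θ(x)) + |x|²` as an `[0,∞]`-valued
kernel, with `W(0) = ∞`. -/
def Wkernel (s : ℝ) (Ω : ℝ → ℝ) (x : ℝ × ℝ) : ℝ≥0∞ :=
  if x = 0 then ⊤ else ENNReal.ofReal (nrm x ^ (-s) * Ω (ang x) + nrm x ^ 2)

/-- The interaction energy `E[ρ] = (1/2) ∬ W(x-y) dρ(y) dρ(x) ∈ [0,∞]`. -/
def energy (s : ℝ) (Ω : ℝ → ℝ) (ρ : Measure (ℝ × ℝ)) : ℝ≥0∞ :=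
  (1 / 2 : ℝ≥0∞) * ∫⁻ x, ∫⁻ y, Wkernel s Ω (x - y) ∂ρ ∂ρ

/-- The real-valued interaction potential (with junk value `0` at the origin,
which is Lebesgue negligible). -/
def Wr (s : ℝ) (Ω : ℝ → ℝ) (x : ℝ × ℝ) : ℝ := nrm x ^ (-s) * Ω (ang x) + nrm x ^ 2

/-- `ρ` minimizes the energy `E` among probability measures on `ℝ²`. -/
def IsMinimizer (E : Measure (ℝ × ℝ) → ℝ≥0∞) (ρ : Measure (ℝ × ℝ)) : Prop :=
  IsProbabilityMeasure ρ ∧ ∀ μ : Measure (ℝ × ℝ), IsProbabilityMeasure μ → E ρ ≤ E μ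

/-- `ρ` is the unique minimizer of `E` up to translation: it is a minimizer and every
minimizer is a translate of it. -/
def IsUniqueMinimizer (E : Measure (ℝ × ℝ) → ℝ≥0∞) (ρ : Measure (ℝ × ℝ)) : Prop :=
  IsMinimizer E ρ ∧ ∀ μ, IsMinimizer E μ → ∃ v : ℝ × ℝ, μ = Measure.map (fun x => x + v) ρ

def R2 (s : ℝ) : ℝ := (8 * Real.sin (s * π / 2) / (s ^ 2 * (2 + s) * π)) ^ (-(1 / (s + 2)))

def C2 (s : ℝ) : ℝ := 4 * Real.sin (s * π / 2) / (s ^ 2 * π ^ 2)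

/-- The density `ρ₂(x) = C₂ (R₂² - |x|²)₊^{s/2}`. -/
def rho2 (s : ℝ) (x : ℝ × ℝ) : ℝ := C2 s * (max (R2 s ^ 2 - nrm x ^ 2) 0) ^ (s / 2)

def rho2meas (s : ℝ) : Measure (ℝ × ℝ) := volume.withDensity fun x => ENNReal.ofReal (rho2 s x)

/-- Counterclockwise rotation of `ℝ²` by the angle `η`. -/
def Rot (η : ℝ) (x : ℝ × ℝ) : ℝ × ℝ :=
  (x.1 * Real.cos η - x.2 * Real.sin η, x.1 * Real.sin η + x.2 * Real.cos η)

/-- The measure `ρ_{a,b,η}`: the pushforward of `ρ₂(x) dx` under `x ↦ R_η (a x₁, b x₂)`. -/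
def rhoE (s a b η : ℝ) : Measure (ℝ × ℝ) :=
  Measure.map (fun x => Rot η (a * x.1, b * x.2)) (rho2meas s)

/-- The measure `ρ_{a,b} = ρ_{a,b,0}`. -/
def rhoAB (s a b : ℝ) : Measure (ℝ × ℝ) := rhoE s a b 0

/-- The Beta function. -/
def BetaR (x y : ℝ) : ℝ := Real.Gamma x * Real.Gamma y / Real.Gamma (x + y)

def C1 (s : ℝ) : ℝ := 2 * Real.cos (s * π / 2) / (s * (s + 1) * π)

def R1 (s : ℝ) : ℝ := (C1 s * BetaR (1 / 2) ((3 + s) / 2)) ^ (-(1 / (s + 2)))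

/-- The density `ρ₁(t) = C₁ (R₁² - t²)₊^{(1+s)/2}` on `ℝ`. -/
def rho1 (s t : ℝ) : ℝ := C1 s * (max (R1 s ^ 2 - t ^ 2) 0) ^ ((1 + s) / 2)

def rho1meas (s : ℝ) : Measure ℝ := volume.withDensity fun t => ENNReal.ofReal (rho1 s t)

/-- The measure `ρ_{1D}`: the pushforward of `ρ₁(t) dt` under `t ↦ (0, t)`. -/
def rho1D (s : ℝ) : Measure (ℝ × ℝ) := Measure.map (fun t : ℝ => ((0 : ℝ), t)) (rho1meas s)

/-- The support of a measure: points all of whose neighborhoods have positive measure. -/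
def msupport {α : Type*} [TopologicalSpace α] [MeasurableSpace α] (μ : Measure α) : Set α :=
  {x | ∀ U ∈ 𝓝 x, 0 < μ U}

def Acoef (s : ℝ) (Ω : ℝ → ℝ) (a b : ℝ) : ℝ :=
  tauC s * (R1 s / R2 s) ^ (2 + s) *
    ∫ φ in (-π)..π,
      (a ^ 2 * Real.cos φ ^ 2 + b ^ 2 * Real.sin φ ^ 2) ^ (-(2 + s) / 2) *
        Real.cos φ ^ 2 * Omt s Ω φ

def Bcoef (s : ℝ) (Ω : ℝ → ℝ) (a b : ℝ) : ℝ :=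
  tauC s * (R1 s / R2 s) ^ (2 + s) *
    ∫ φ in (-π)..π,
      (a ^ 2 * Real.cos φ ^ 2 + b ^ 2 * Real.sin φ ^ 2) ^ (-(2 + s) / 2) *
        Real.sin φ ^ 2 * Omt s Ω φ

def Dcoef (s : ℝ) (Ω : ℝ → ℝ) (a b : ℝ) : ℝ :=
  tauC s * (R1 s / R2 s) ^ (2 + s) *
    ∫ φ in (-π)..π,
      (a ^ 2 * Real.cos φ ^ 2 + b ^ 2 * Real.sin φ ^ 2) ^ (-(2 + s) / 2) *
        (Real.cos φ * Real.sin φ) * Omt s Ω φ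

def Mfun (s : ℝ) (Ω : ℝ → ℝ) (a b : ℝ) : ℝ :=
  tauC s * (R1 s / R2 s) ^ (2 + s) *
    ∫ φ in (-π)..π, (a ^ 2 * Real.cos φ ^ 2 + b ^ 2 * Real.sin φ ^ 2) ^ (-s / 2) * Omt s Ω φ

def calE (s : ℝ) (Ω : ℝ → ℝ) (a b : ℝ) : ℝ := Mfun s Ω a b + s / 2 * (a ^ 2 + b ^ 2)

/-- A measure has compact support. -/
def HasCompactSupportM (ρ : Measure (ℝ × ℝ)) : Prop :=
  ∃ K : Set (ℝ × ℝ), IsCompact K ∧ ρ Kᶜ = 0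

/-- The linear interpolation `(1-t) ρ₀ + t ρ₁`. -/
def mix (ρ₀ ρ₁ : Measure (ℝ × ℝ)) (t : ℝ) : Measure (ℝ × ℝ) :=
  ENNReal.ofReal (1 - t) • ρ₀ + ENNReal.ofReal t • ρ₁

/-- Linear interpolation convexity (LIC): for any two distinct compactly supported
probability measures of finite energy with the same center of mass, the energy is
strictly convex along their linear interpolation. -/
def LIC (s : ℝ) (Ω : ℝ → ℝ) : Prop :=
  ∀ ρ₀ ρ₁ : Measure (ℝ × ℝ), IsProbabilityMeasure ρ₀ → IsProbabilityMeasure ρ₁ →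
    HasCompactSupportM ρ₀ → HasCompactSupportM ρ₁ →
    energy s Ω ρ₀ < ⊤ → energy s Ω ρ₁ < ⊤ → ρ₀ ≠ ρ₁ →
    (∫ x, x ∂ρ₀) = (∫ x, x ∂ρ₁) →
    StrictConvexOn ℝ (Set.Icc (0 : ℝ) 1) fun t => (energy s Ω (mix ρ₀ ρ₁ t)).toReal

/-- The interaction energy of a bounded compactly supported signed density. -/
def energyR (s : ℝ) (Ω : ℝ → ℝ) (μ : ℝ × ℝ → ℝ) : ℝ :=
  (1 / 2) * ∫ x : ℝ × ℝ, (∫ y : ℝ × ℝ, Wr s Ω (x - y) * μ y) * μ x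

/-- The logarithmic potential `W_log(x) = -ln|x| + Ω(θ(x)) + |x|²` (real valued,
with junk value at the origin). -/
def Wlog (Ω : ℝ → ℝ) (x : ℝ × ℝ) : ℝ := -Real.log (nrm x) + Ω (ang x) + nrm x ^ 2

def WlogKernel (Ω : ℝ → ℝ) (x : ℝ × ℝ) : ℝ≥0∞ :=
  if x = 0 then ⊤ else ENNReal.ofReal (Wlog Ω x)

/-- The logarithmic interaction energy. -/
def energyLog (Ω : ℝ → ℝ) (ρ : Measure (ℝ × ℝ)) : ℝ≥0∞ :=
  (1 / 2 : ℝ≥0∞) * ∫⁻ x, ∫⁻ y, WlogKernel Ω (x - y) ∂ρ ∂ρ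

/-- The family `W_{(s)}(x) = |x|^{-s} (1/s + Ω(θ(x))) - 1/s + |x|²`. -/
def Wsfam (s : ℝ) (Ω : ℝ → ℝ) (x : ℝ × ℝ) : ℝ :=
  nrm x ^ (-s) * (1 / s + Ω (ang x)) - 1 / s + nrm x ^ 2

/-- The transformed angle function of `W_{(s)}`. -/
def Omts (s : ℝ) (Ω : ℝ → ℝ) (φ : ℝ) : ℝ :=
  tauC (2 - s) * (∫ θ in (-π)..π, |Real.cos (φ - θ)| ^ (-2 + s) * (Ω θ - Ω (φ + π / 2)))
    + cC s * (1 / s + Ω (φ + π / 2))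

/-- The truncated integral appearing in the principal value defining `Ω̃_log`. -/
def pvInt (Ω : ℝ → ℝ) (φ δ : ℝ) : ℝ :=
  ∫ θ in {θ : ℝ | θ ∈ Set.Icc (-π) π ∧ δ ≤ |Real.cos (φ - θ)|},
    |Real.cos (φ - θ)| ^ (-(2 : ℝ)) * (Ω θ - Ω (φ + π / 2))

def OmtLogFam (Ω : ℝ → ℝ) (φ δ : ℝ) : ℝ :=
  -((2 * π) ^ (-(2 : ℝ))) * pvInt Ω φ δ + (2 * π)⁻¹

/-- The transformed angle function `Ω̃_log`, defined as the principal value limit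
(via `limUnder`, which returns the limit whenever it exists). -/
def OmtLog (Ω : ℝ → ℝ) (φ : ℝ) : ℝ := limUnder (𝓝[>] (0 : ℝ)) (OmtLogFam Ω φ)

/-- The closed elliptical region `B(0; a, b)`. -/
def ellipseSet (a b : ℝ) : Set (ℝ × ℝ) := {x | x.1 ^ 2 / a ^ 2 + x.2 ^ 2 / b ^ 2 ≤ 1}

def ALog (Ω : ℝ → ℝ) (a b : ℝ) : ℝ :=
  ∫ φ in (-π)..π,
    (a ^ 2 * Real.cos φ ^ 2 + b ^ 2 * Real.sin φ ^ 2)⁻¹ * Real.cos φ ^ 2 * OmtLog Ω φ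

def BLog (Ω : ℝ → ℝ) (a b : ℝ) : ℝ :=
  ∫ φ in (-π)..π,
    (a ^ 2 * Real.cos φ ^ 2 + b ^ 2 * Real.sin φ ^ 2)⁻¹ * Real.sin φ ^ 2 * OmtLog Ω φ

def DLog (Ω : ℝ → ℝ) (a b : ℝ) : ℝ :=
  ∫ φ in (-π)..π,
    (a ^ 2 * Real.cos φ ^ 2 + b ^ 2 * Real.sin φ ^ 2)⁻¹ *
      (Real.cos φ * Real.sin φ) * OmtLog Ω φ

/-- The uniform probability measure on the rotated ellipse `B(0; a, b, η)`. -/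
def unifEllipse (a b η : ℝ) : Measure (ℝ × ℝ) :=
  volume.withDensity ((Rot η '' ellipseSet a b).indicator fun _ => ENNReal.ofReal ((π * a * b)⁻¹))

/-- The pushforward of the density `(2/(πb²)) (b² - t²)₊^{1/2} dt` under `t ↦ R_η (0, t)`. -/
def semicirc (b η : ℝ) : Measure (ℝ × ℝ) :=
  Measure.map (fun t : ℝ => Rot η (0, t))
    (volume.withDensity fun t =>
      ENNReal.ofReal (2 / (π * b ^ 2) * (max (b ^ 2 - t ^ 2) 0) ^ ((1 : ℝ) / 2)))

/-- The vertical semicircle measure `ρ_{1D}` for the logarithmic case. -/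
def rho1Dlog : Measure (ℝ × ℝ) :=
  Measure.map (fun t : ℝ => ((0 : ℝ), t))
    (volume.withDensity fun t => ENNReal.ofReal (2 / π * (max (1 - t ^ 2) 0) ^ ((1 : ℝ) / 2)))

/-- The measure `ψ(t) dt` placed on the vertical axis. -/
def rhoPsi (ψ : ℝ → ℝ) : Measure (ℝ × ℝ) :=
  Measure.map (fun t : ℝ => ((0 : ℝ), t)) (volume.withDensity fun t => ENNReal.ofReal (ψ t))

/-! ### Substitutions and the equilibrium potential -/

lemma lintegral_beta {a b : ℝ} (ha : 0 < a) (hb : 0 < b) :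
    ∫⁻ v in Ioo (0:ℝ) 1, ENNReal.ofReal (v ^ (a - 1) * (1 - v) ^ (b - 1)) =
      ENNReal.ofReal (BetaR a b) := by
  have h := ProbabilityTheory.lintegral_betaPDF_eq_one ha hb
  have hp : 0 < ProbabilityTheory.beta a b := ProbabilityTheory.beta_pos ha hb
  have hB : BetaR a b = ProbabilityTheory.beta a b := rfl
  rw [ProbabilityTheory.lintegral_betaPDF] at h
  have h2 : ∀ v : ℝ, ENNReal.ofReal (v ^ (a - 1) * (1 - v) ^ (b - 1)) =
      ENNReal.ofReal (ProbabilityTheory.beta a b) *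
        ENNReal.ofReal (1 / ProbabilityTheory.beta a b * v ^ (a - 1) * (1 - v) ^ (b - 1)) := by
    intro v
    rw [← ENNReal.ofReal_mul hp.le]
    congr 1
    field_simp
  simp_rw [h2]
  rw [lintegral_const_mul' _ _ ENNReal.ofReal_ne_top, h, mul_one, hB]

/-- One-dimensional substitution `x = f y` in a Lebesgue integral, for a map `f` with
inverse `g`. -/
lemma lintegral_subst {S T : Set ℝ} (hS : MeasurableSet S) (f f' g : ℝ → ℝ)
    (hf : ∀ y ∈ S, HasDerivAt f (f' y) y) (hST : ∀ y ∈ S, f y ∈ T)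
    (hTS : ∀ x ∈ T, g x ∈ S) (hgf : ∀ y ∈ S, g (f y) = y) (hfg : ∀ x ∈ T, f (g x) = x)
    (F : ℝ → ℝ≥0∞) :
    ∫⁻ x in T, F x = ∫⁻ y in S, ENNReal.ofReal |f' y| * F (f y) := by
  have him : f '' S = T := by
    ext x; constructor
    · rintro ⟨y, hy, rfl⟩; exact hST y hy
    · intro hx; exact ⟨g x, hTS x hx, hfg x hx⟩
  rw [← him]
  refine lintegral_image_eq_lintegral_abs_deriv_mul hS
    (fun y hy => (hf y hy).hasDerivWithinAt) ?_ F
  intro y hy z hz h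
  rw [← hgf y hy, ← hgf z hz, h]

/-- The potential `∫ |x - t|^{-s} (ρ² - t²)^{(s-1)/2} dt` over `(-ρ, ρ)`. -/
def eqPot (s ρ x : ℝ) : ℝ≥0∞ :=
  ∫⁻ t in Ioo (-ρ) ρ, ENNReal.ofReal (|x - t| ^ (-s) * (ρ ^ 2 - t ^ 2) ^ ((s - 1) / 2))

/-- The value `π / cos (sπ/2)` of the equilibrium potential. -/
def kap (s : ℝ) : ℝ := π / Real.cos (s * π / 2)

lemma cos_pos_s {s : ℝ} (hs0 : 0 < s) (hs1 : s < 1) : 0 < Real.cos (s * π / 2) := by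
  apply Real.cos_pos_of_mem_Ioo
  constructor <;> nlinarith [Real.pi_pos]

lemma kap_pos {s : ℝ} (hs0 : 0 < s) (hs1 : s < 1) : 0 < kap s :=
  div_pos Real.pi_pos (cos_pos_s hs0 hs1)

lemma gamma_mul_kap (s : ℝ) :
    Real.Gamma ((1 - s) / 2) * Real.Gamma ((1 + s) / 2) = kap s := by
  have h := Real.Gamma_mul_Gamma_one_sub ((1 - s) / 2)
  rw [show 1 - (1 - s) / 2 = (1 + s) / 2 by ring] at h
  rw [h, kap, show π * ((1 - s) / 2) = π / 2 - s * π / 2 by ring, Real.sin_pi_div_two_sub]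

lemma betaR_kap (s : ℝ) : BetaR ((1 - s) / 2) ((1 + s) / 2) = kap s := by
  rw [BetaR, gamma_mul_kap, show (1 - s) / 2 + (1 + s) / 2 = 1 by ring, Real.Gamma_one, div_one]

/-- Scaling of the line. -/
lemma lintegral_scale {c : ℝ} (hc : 0 < c) (a b : ℝ) (F : ℝ → ℝ≥0∞) :
    ∫⁻ x in Ioo (c * a) (c * b), F x = ENNReal.ofReal c * ∫⁻ y in Ioo a b, F (c * y) := by
  rw [lintegral_subst (S := Ioo a b) measurableSet_Ioo (fun y => c * y) (fun _ => c)
    (fun x => x / c) (fun y _ => by simpa using (hasDerivAt_id y).const_mul c)]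
  · rw [abs_of_pos hc, lintegral_const_mul' _ _ ENNReal.ofReal_ne_top]
  · rintro y ⟨h1, h2⟩
    exact ⟨by gcongr, by gcongr⟩
  · rintro x ⟨h1, h2⟩
    exact ⟨by rw [lt_div_iff₀ hc]; linarith, by rw [div_lt_iff₀ hc]; linarith⟩
  · intro y _; field_simp
  · intro y _; field_simp

/-- Reflection of the line. -/
lemma lintegral_reflect (a b : ℝ) (F : ℝ → ℝ≥0∞) :
    ∫⁻ x in Ioo (-b) (-a), F x = ∫⁻ y in Ioo a b, F (-y) := by
  rw [lintegral_subst (S := Ioo a b) measurableSet_Ioo (fun y => -y) (fun _ => -1)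
    (fun x => -x) (fun y _ => hasDerivAt_neg y)]
  · simp
  · rintro y ⟨h1, h2⟩
    exact ⟨by linarith, by linarith⟩
  · rintro x ⟨h1, h2⟩
    exact ⟨by linarith, by linarith⟩
  · intro y _; simp
  · intro y _; simp

lemma lintegral_Ioo_split {r : ℝ} (hr : 0 < r) (F : ℝ → ℝ≥0∞) :
    ∫⁻ x in Ioo (-r) r, F x = (∫⁻ y in Ioo 0 r, F y) + ∫⁻ y in Ioo 0 r, F (-y) := by
  have h1 := lintegral_reflect 0 r F
  have hd : Disjoint (Ioo (-r) 0) (Ico 0 r) := by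
    rw [Set.disjoint_left]; rintro x ⟨_, h⟩ ⟨h', _⟩; linarith
  have h2 : ∫⁻ y in Ico 0 r, F y = ∫⁻ y in Ioo 0 r, F y :=
    (setLIntegral_congr Ioo_ae_eq_Ico).symm
  rw [neg_zero] at h1
  rw [← Ioo_union_Ico_eq_Ioo (show -r < 0 by linarith) hr.le,
    lintegral_union measurableSet_Ico hd, h2, h1, add_comm]

lemma eqPot_neg (s ρ x : ℝ) : eqPot s ρ (-x) = eqPot s ρ x := by
  unfold eqPot
  have h := lintegral_reflect (-ρ) ρ
    (fun t => ENNReal.ofReal (|x - t| ^ (-s) * (ρ ^ 2 - t ^ 2) ^ ((s - 1) / 2)))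
  rw [neg_neg] at h
  rw [h]
  refine lintegral_congr fun t => ?_
  rw [show |-x - t| = |x - -t| by rw [← abs_neg]; congr 1; ring, neg_sq]

lemma eqPot_abs (s ρ x : ℝ) : eqPot s ρ |x| = eqPot s ρ x := by
  rcases abs_cases x with ⟨h, _⟩ | ⟨h, _⟩ <;> rw [h]
  exact eqPot_neg s ρ x

lemma eqPot_scale (s : ℝ) {ρ : ℝ} (hρ : 0 < ρ) (x : ℝ) : eqPot s ρ (ρ * x) = eqPot s 1 x := by
  unfold eqPot
  have h := lintegral_scale hρ (-1) 1
    (fun t => ENNReal.ofReal (|ρ * x - t| ^ (-s) * (ρ ^ 2 - t ^ 2) ^ ((s - 1) / 2)))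
  rw [mul_one, mul_neg, mul_one] at h
  rw [h, ← lintegral_const_mul' _ _ ENNReal.ofReal_ne_top]
  refine setLIntegral_congr_fun measurableSet_Ioo fun t ht => ?_
  have h1 : 0 ≤ 1 ^ 2 - t ^ 2 := by nlinarith [ht.1, ht.2]
  show ENNReal.ofReal ρ * _ = _
  rw [← ENNReal.ofReal_mul hρ.le, ← mul_sub, abs_mul, abs_of_pos hρ,
    show ρ ^ 2 - (ρ * t) ^ 2 = ρ ^ 2 * (1 ^ 2 - t ^ 2) by ring,
    Real.mul_rpow hρ.le (abs_nonneg _), Real.mul_rpow (by positivity) h1,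
    ← Real.rpow_natCast_mul hρ.le]
  congr 1
  have : ρ * (ρ ^ (-s) * ρ ^ ((2:ℕ) * ((s - 1) / 2))) = 1 := by
    nth_rewrite 1 [← Real.rpow_one ρ]
    rw [← Real.rpow_add hρ, ← Real.rpow_add hρ,
      show 1 + (-s + ((2:ℕ):ℝ) * ((s - 1) / 2)) = 0 by push_cast; ring, Real.rpow_zero]
  linear_combination (|x - t| ^ (-s) * (1 ^ 2 - t ^ 2) ^ ((s - 1) / 2)) * this

/-! ### The potential of the equilibrium density -/

/-- The potential after the Möbius involution `y ↦ (x - y) / (1 - x y)` of `(-1, 1)`. -/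
lemma eqPot_mobius {s x : ℝ} (hx : |x| < 1) :
    eqPot s 1 x = ∫⁻ y in Ioo (-1:ℝ) 1, ENNReal.ofReal
      ((1 - x ^ 2) ^ ((1 - s) / 2) * |y| ^ (-s) * (1 - y ^ 2) ^ ((s - 1) / 2) / (1 - x * y)) := by
  obtain ⟨hx1, hx2⟩ := abs_lt.1 hx
  have hX : 0 < 1 - x ^ 2 := by nlinarith
  have hD : ∀ y ∈ Ioo (-1:ℝ) 1, 0 < 1 - x * y := by
    rintro y ⟨h1, h2⟩
    rcases le_total 0 x with h | h <;> nlinarith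
  have hinv : ∀ y ∈ Ioo (-1:ℝ) 1, (x - (x - y) / (1 - x * y)) / (1 - x * ((x - y) / (1 - x * y))) = y := by
    intro y hy
    have h1 := hD y hy
    have e1 : x - (x - y) / (1 - x * y) = y * (1 - x ^ 2) / (1 - x * y) := by field_simp; ring
    have e2 : 1 - x * ((x - y) / (1 - x * y)) = (1 - x ^ 2) / (1 - x * y) := by field_simp; ring
    rw [e1, e2, div_div_div_cancel_right₀ h1.ne', mul_div_assoc, div_self hX.ne', mul_one]
  have hmap : ∀ y ∈ Ioo (-1:ℝ) 1, (x - y) / (1 - x * y) ∈ Ioo (-1:ℝ) 1 := by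
    intro y hy
    have h1 := hD y hy
    obtain ⟨h2, h3⟩ := hy
    exact ⟨by rw [lt_div_iff₀ h1]; nlinarith, by rw [div_lt_iff₀ h1]; nlinarith⟩
  unfold eqPot
  rw [lintegral_subst (S := Ioo (-1:ℝ) 1) (T := Ioo (-1:ℝ) 1) measurableSet_Ioo
    (fun y => (x - y) / (1 - x * y)) (fun y => (x ^ 2 - 1) / (1 - x * y) ^ 2)
    (fun y => (x - y) / (1 - x * y)) ?_ hmap hmap hinv hinv]
  · refine setLIntegral_congr_fun measurableSet_Ioo fun y hy => ?_
    have hd := hD y hy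
    have hY : 0 ≤ 1 - y ^ 2 := by nlinarith [hy.1, hy.2]
    show ENNReal.ofReal |(x ^ 2 - 1) / (1 - x * y) ^ 2| * ENNReal.ofReal _ = ENNReal.ofReal _
    rw [← ENNReal.ofReal_mul (abs_nonneg _)]
    congr 1
    have e0 : |(x ^ 2 - 1) / (1 - x * y) ^ 2| = (1 - x ^ 2) / (1 - x * y) ^ 2 := by
      rw [abs_div, abs_of_neg (by linarith), abs_of_pos (by positivity), neg_sub]
    have e1 : x - (x - y) / (1 - x * y) = y * (1 - x ^ 2) / (1 - x * y) := by field_simp; ring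
    have e2 : (1:ℝ) ^ 2 - ((x - y) / (1 - x * y)) ^ 2 =
        (1 - x ^ 2) * (1 - y ^ 2) / (1 - x * y) ^ 2 := by field_simp; ring
    rw [e0, e1, e2, abs_div, abs_mul, abs_of_pos hX, abs_of_pos hd]
    generalize 1 - x * y = D at *
    generalize 1 - x ^ 2 = X at *
    generalize 1 - y ^ 2 = Y at *
    rw [Real.div_rpow (by positivity) hd.le, Real.mul_rpow (abs_nonneg _) hX.le,
      Real.div_rpow (by positivity) (by positivity), Real.mul_rpow hX.le hY,
      ← Real.rpow_natCast_mul hd.le]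
    have eX : X * X ^ (-s) * X ^ ((s - 1) / 2) = X ^ ((1 - s) / 2) := by
      nth_rewrite 1 [← Real.rpow_one X]
      rw [← Real.rpow_add hX, ← Real.rpow_add hX]; congr 1; ring
    have eD : D ^ 2 * D ^ (-s) * D ^ (((2:ℕ):ℝ) * ((s - 1) / 2)) = D := by
      rw [← Real.rpow_natCast D 2, ← Real.rpow_add hd, ← Real.rpow_add hd,
        show ((2:ℕ):ℝ) + -s + ((2:ℕ):ℝ) * ((s - 1) / 2) = 1 by push_cast; ring, Real.rpow_one]
    rw [← eX]
    calc X / D ^ 2 * (|y| ^ (-s) * X ^ (-s) / D ^ (-s) *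
          (X ^ ((s - 1) / 2) * Y ^ ((s - 1) / 2) / D ^ (((2:ℕ):ℝ) * ((s - 1) / 2))))
        = X * X ^ (-s) * X ^ ((s - 1) / 2) * |y| ^ (-s) * Y ^ ((s - 1) / 2) /
          (D ^ 2 * D ^ (-s) * D ^ (((2:ℕ):ℝ) * ((s - 1) / 2))) := by
          have := Real.rpow_pos_of_pos hd (-s)
          have := Real.rpow_pos_of_pos hd (((2:ℕ):ℝ) * ((s - 1) / 2))
          field_simp
      _ = _ := by rw [eD]
  · intro y hy
    have h1 := hD y hy
    have := ((hasDerivAt_id y).const_sub x).div (((hasDerivAt_id y).const_mul x).const_sub 1) h1.ne'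
    refine HasDerivAt.congr_deriv this ?_
    simp only [id]; ring

/-- Inside the interval, the potential of `(1 - t²)^{(s-1)/2}` is constant. -/
lemma eqPot_inside {s x : ℝ} (hs0 : 0 < s) (hs1 : s < 1) (hx : |x| < 1) :
    eqPot s 1 x = ENNReal.ofReal (kap s) := by
  obtain ⟨hx1, hx2⟩ := abs_lt.1 hx
  have hX : 0 < 1 - x ^ 2 := by nlinarith
  rw [eqPot_mobius hx, lintegral_Ioo_split one_pos, ← betaR_kap,
    ← lintegral_beta (by linarith) (by linarith), ← lintegral_add_left (by fun_prop)]
  have hE : ∀ y ∈ Ioo (0:ℝ) 1, 0 < 1 - x ^ 2 * y ^ 2 := by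
    rintro y ⟨h1, h2⟩
    have : y ^ 2 < 1 := by nlinarith
    nlinarith [sq_nonneg x]
  have hE' : ∀ v ∈ Ioo (0:ℝ) 1, 0 < 1 - x ^ 2 + x ^ 2 * v := by
    rintro v ⟨h1, h2⟩
    nlinarith [sq_nonneg x, mul_nonneg (sq_nonneg x) h1.le]
  symm
  rw [lintegral_subst (S := Ioo (0:ℝ) 1) (T := Ioo (0:ℝ) 1) measurableSet_Ioo
    (fun y => (1 - x ^ 2) * y ^ 2 / (1 - x ^ 2 * y ^ 2))
    (fun y => (1 - x ^ 2) * (2 * y) / (1 - x ^ 2 * y ^ 2) ^ 2)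
    (fun v => √(v / (1 - x ^ 2 + x ^ 2 * v)))]
  · symm
    refine setLIntegral_congr_fun measurableSet_Ioo fun y hy => ?_
    have hd := hE y hy
    have hy0 := hy.1
    have hY : 0 < 1 - y ^ 2 := by nlinarith [hy.1, hy.2]
    have hD1 : 0 < 1 - x * y := by rcases le_total 0 x with h | h <;> nlinarith [hy.1, hy.2]
    have hD2 : 0 < 1 - x * -y := by rcases le_total 0 x with h | h <;> nlinarith [hy.1, hy.2]
    have hp := Real.rpow_pos_of_pos hX ((1 - s) / 2)
    have hp2 := Real.rpow_pos_of_pos hY ((s - 1) / 2)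
    have hp3 := Real.rpow_pos_of_pos hy0 (-s)
    show ENNReal.ofReal _ + ENNReal.ofReal _ = ENNReal.ofReal _ * ENNReal.ofReal _
    rw [neg_sq, abs_neg, abs_of_pos hy0, ← ENNReal.ofReal_add (by positivity) (by positivity),
      ← ENNReal.ofReal_mul (abs_nonneg _), abs_of_pos (by positivity)]
    congr 1
    have e1 : 1 - (1 - x ^ 2) * y ^ 2 / (1 - x ^ 2 * y ^ 2) = (1 - y ^ 2) / (1 - x ^ 2 * y ^ 2) := by
      field_simp; ring
    have e2 : (1 - x ^ 2) ^ ((1 - s) / 2) * y ^ (-s) * (1 - y ^ 2) ^ ((s - 1) / 2) / (1 - x * y) +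
        (1 - x ^ 2) ^ ((1 - s) / 2) * y ^ (-s) * (1 - y ^ 2) ^ ((s - 1) / 2) / (1 - x * -y) =
        2 * ((1 - x ^ 2) ^ ((1 - s) / 2) * y ^ (-s) * (1 - y ^ 2) ^ ((s - 1) / 2)) /
          (1 - x ^ 2 * y ^ 2) := by
      rw [show 1 - x * -y = 1 + x * y by ring] at hD2 ⊢
      rw [show 1 - x ^ 2 * y ^ 2 = (1 - x * y) * (1 + x * y) by ring]
      field_simp; ring
    rw [e1, e2]
    generalize 1 - x ^ 2 * y ^ 2 = D at *
    generalize 1 - x ^ 2 = X at *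
    generalize 1 - y ^ 2 = Y at *
    rw [Real.div_rpow (by positivity) hd.le, Real.mul_rpow hX.le (by positivity),
      Real.div_rpow (by positivity) (by positivity), ← Real.rpow_natCast_mul hy0.le]
    have eX : X ^ ((1 - s) / 2) = X * X ^ ((1 - s) / 2 - 1) := by
      rw [← Real.rpow_one_add' hX.le]
      · congr 1; ring
      · intro h; linarith
    have ey : y ^ (-s) = y * y ^ (((2:ℕ):ℝ) * ((1 - s) / 2 - 1)) := by
      rw [← Real.rpow_one_add' hy0.le]
      · congr 1; push_cast; ring
      · push_cast; intro h; linarith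
    have eD : D ^ ((1 - s) / 2 - 1) * D ^ ((1 + s) / 2 - 1) = D⁻¹ := by
      rw [← Real.rpow_add hd, ← Real.rpow_neg_one]; congr 1; ring
    rw [eX, ey, show (s - 1) / 2 = (1 + s) / 2 - 1 by ring]
    have q1 := Real.rpow_pos_of_pos hd ((1 - s) / 2 - 1)
    have q2 := Real.rpow_pos_of_pos hd ((1 + s) / 2 - 1)
    calc _ = X * (2 * y) / D ^ 2 * (X ^ ((1 - s) / 2 - 1) * y ^ (((2:ℕ):ℝ) * ((1 - s) / 2 - 1)) *
          Y ^ ((1 + s) / 2 - 1)) / (D⁻¹) := by field_simp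
      _ = _ := by rw [← eD]; field_simp
  · intro y hy
    have h1 := hE y hy
    have := (((hasDerivAt_pow 2 y)).const_mul (1 - x ^ 2)).div
      (((hasDerivAt_pow 2 y).const_mul (x ^ 2)).const_sub 1) h1.ne'
    refine HasDerivAt.congr_deriv this ?_
    push_cast; ring
  · intro y hy
    have h1 := hE y hy
    have hY : 0 < 1 - y ^ 2 := by nlinarith [hy.1, hy.2]
    have := hy.1
    refine ⟨by positivity, ?_⟩
    rw [div_lt_one h1]; nlinarith
  · intro v hv
    have h1 := hE' v hv
    have := hv.1
    refine ⟨by positivity, ?_⟩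
    rw [Real.sqrt_lt' one_pos, div_lt_iff₀ h1]; nlinarith [hv.2]
  · intro y hy
    have h1 := hE y hy
    have : (1 - x ^ 2) * y ^ 2 / (1 - x ^ 2 * y ^ 2) / (1 - x ^ 2 + x ^ 2 *
      ((1 - x ^ 2) * y ^ 2 / (1 - x ^ 2 * y ^ 2))) = y ^ 2 := by
      have e : 1 - x ^ 2 + x ^ 2 * ((1 - x ^ 2) * y ^ 2 / (1 - x ^ 2 * y ^ 2)) =
        (1 - x ^ 2) / (1 - x ^ 2 * y ^ 2) := by field_simp; ring
      rw [e]; field_simp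
    show √(_) = y
    rw [this, Real.sqrt_sq hy.1.le]
  · intro v hv
    have h1 := hE' v hv
    have := hv.1
    show (1 - x ^ 2) * √(v / (1 - x ^ 2 + x ^ 2 * v)) ^ 2 /
      (1 - x ^ 2 * √(v / (1 - x ^ 2 + x ^ 2 * v)) ^ 2) = v
    rw [Real.sq_sqrt (by positivity)]
    have e : 1 - x ^ 2 * (v / (1 - x ^ 2 + x ^ 2 * v)) = (1 - x ^ 2) / (1 - x ^ 2 + x ^ 2 * v) := by
      field_simp; ring
    rw [e]; field_simp

/-- `t = 1 - 2v` turns an integral over `(-1,1)` into a Beta integral. -/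
lemma lintegral_beta_symm {a b : ℝ} (ha : 0 < a) (hb : 0 < b) :
    ∫⁻ t in Ioo (-1:ℝ) 1, ENNReal.ofReal ((1 - t) ^ (a - 1) * (1 + t) ^ (b - 1)) =
      ENNReal.ofReal (2 ^ (a + b - 1) * BetaR a b) := by
  rw [ENNReal.ofReal_mul (by positivity), ← lintegral_beta ha hb,
    ← lintegral_const_mul' _ _ ENNReal.ofReal_ne_top]
  rw [lintegral_subst (S := Ioo (0:ℝ) 1) measurableSet_Ioo (fun v => 1 - 2 * v) (fun _ => -2)
    (fun t => (1 - t) / 2)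
    (fun y _ => by simpa using ((hasDerivAt_id y).const_mul 2).const_sub 1)]
  · refine setLIntegral_congr_fun measurableSet_Ioo fun v hv => ?_
    have h1 := hv.1
    have h2 : 0 < 1 - v := by linarith [hv.2]
    show ENNReal.ofReal _ * ENNReal.ofReal _ = ENNReal.ofReal _ * ENNReal.ofReal _
    rw [← ENNReal.ofReal_mul (by positivity), ← ENNReal.ofReal_mul (by positivity)]
    congr 1
    rw [show 1 - (1 - 2 * v) = 2 * v by ring, show 1 + (1 - 2 * v) = 2 * (1 - v) by ring,
      Real.mul_rpow two_pos.le h1.le, Real.mul_rpow two_pos.le h2.le,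
      show a + b - 1 = 1 + (a - 1) + (b - 1) by ring, Real.rpow_add two_pos,
      Real.rpow_add two_pos, Real.rpow_one, abs_neg, abs_two]
    ring
  · rintro v ⟨h1, h2⟩; exact ⟨by linarith, by linarith⟩
  · rintro v ⟨h1, h2⟩; exact ⟨by linarith, by linarith⟩
  · intro v _; ring
  · intro v _; ring

/-- Outside the interval, the potential is at most its value inside. -/
lemma eqPot_outside {s x : ℝ} (hs0 : 0 < s) (hs1 : s < 1) (hx : 1 ≤ |x|) :
    eqPot s 1 x ≤ ENNReal.ofReal (kap s) := by
  rw [← eqPot_abs]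
  generalize |x| = y at hx
  have h := lintegral_beta_symm (a := (1 - s) / 2) (b := (1 + s) / 2) (by linarith) (by linarith)
  rw [betaR_kap, show (1 - s) / 2 + (1 + s) / 2 - 1 = 0 by ring, Real.rpow_zero, one_mul] at h
  rw [← h]
  refine setLIntegral_mono' measurableSet_Ioo fun t ht => ENNReal.ofReal_le_ofReal ?_
  have h1 : 0 < 1 - t := by linarith [ht.2]
  have h2 : 0 < 1 + t := by linarith [ht.1]
  rw [show (1:ℝ) ^ 2 - t ^ 2 = (1 - t) * (1 + t) by ring, Real.mul_rpow h1.le h2.le, ← mul_assoc,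
    show (1 + s) / 2 - 1 = (s - 1) / 2 by ring,
    show (1 - s) / 2 - 1 = -s + (s - 1) / 2 by ring, Real.rpow_add h1, abs_of_pos (by linarith)]
  gcongr ?_ * _ * _
  exact Real.rpow_le_rpow_of_nonpos h1 (by linarith) (by linarith)

lemma eqPot_le {s x : ℝ} (hs0 : 0 < s) (hs1 : s < 1) :
    eqPot s 1 x ≤ ENNReal.ofReal (kap s) := by
  rcases lt_or_ge |x| 1 with h | h
  · exact (eqPot_inside hs0 hs1 h).le
  · exact eqPot_outside hs0 hs1 h

/-! ### The potential of the density `(R² - t²)^{(1+s)/2}` -/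

/-- The potential `∫ |x - t|^{-s} (R² - t²)^{(1+s)/2} dt` over `(-R, R)`. -/
def sPot (s R x : ℝ) : ℝ≥0∞ :=
  ∫⁻ t in Ioo (-R) R, ENNReal.ofReal (|x - t| ^ (-s) * (R ^ 2 - t ^ 2) ^ ((1 + s) / 2))

/-- `(R² - t²)^{(1+s)/2}` as a superposition of the densities `(ρ² - t²)^{(s-1)/2}` over the radii
`ρ ∈ (|t|, R)`. -/
lemma layer_cake {s R t : ℝ} (hs0 : 0 < s) (ht : |t| < R) :
    ENNReal.ofReal ((R ^ 2 - t ^ 2) ^ ((1 + s) / 2)) =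
      ∫⁻ ρ in Ioo |t| R, ENNReal.ofReal ((1 + s) * ρ * (ρ ^ 2 - t ^ 2) ^ ((s - 1) / 2)) := by
  have hc : ContinuousOn (fun ρ : ℝ => (ρ ^ 2 - t ^ 2) ^ ((1 + s) / 2)) (Icc |t| R) := by
    apply Continuous.continuousOn
    exact (by fun_prop : Continuous fun ρ : ℝ => ρ ^ 2 - t ^ 2).rpow_const
      (fun _ => Or.inr (by linarith))
  have hpos : ∀ ρ ∈ Ioo |t| R, 0 < ρ ^ 2 - t ^ 2 := by
    rintro ρ ⟨h1, h2⟩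
    rw [← sq_abs t]; nlinarith [abs_nonneg t]
  have hd : ∀ ρ ∈ Ioo |t| R, HasDerivAt (fun ρ : ℝ => (ρ ^ 2 - t ^ 2) ^ ((1 + s) / 2))
      ((1 + s) * ρ * (ρ ^ 2 - t ^ 2) ^ ((s - 1) / 2)) ρ := by
    intro ρ hρ
    have := ((hasDerivAt_pow 2 ρ).sub_const (t ^ 2)).rpow_const (p := (1 + s) / 2)
      (Or.inl (hpos ρ hρ).ne')
    refine this.congr_deriv ?_
    rw [show (1 + s) / 2 - 1 = (s - 1) / 2 by ring]; push_cast; ring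
  have hn : ∀ ρ ∈ Ioo |t| R, 0 ≤ (1 + s) * ρ * (ρ ^ 2 - t ^ 2) ^ ((s - 1) / 2) := by
    intro ρ hρ
    have := hpos ρ hρ
    have : 0 ≤ ρ := (abs_nonneg t).trans hρ.1.le
    positivity
  have hi := intervalIntegral.integrableOn_deriv_of_nonneg hc hd hn
  have hI := intervalIntegral.integral_eq_sub_of_hasDerivAt_of_le ht.le hc hd
    ((intervalIntegrable_iff_integrableOn_Ioc_of_le ht.le).2 hi)
  rw [sq_abs, sub_self, Real.zero_rpow (by linarith), sub_zero,
    intervalIntegral.integral_of_le ht.le, integral_Ioc_eq_integral_Ioo] at hI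
  rw [← hI, ofReal_integral_eq_lintegral_ofReal (hi.mono_set Ioo_subset_Ioc_self)]
  exact (ae_restrict_iff' measurableSet_Ioo).2 (Eventually.of_forall hn)

/-- The potential `sPot` is a superposition of the equilibrium potentials `eqPot`. -/
lemma sPot_eq {s R x : ℝ} (hs0 : 0 < s) :
    sPot s R x = ∫⁻ ρ in Ioo 0 R, ENNReal.ofReal ((1 + s) * ρ) * eqPot s ρ x := by
  let F : ℝ → ℝ → ℝ≥0∞ := fun t ρ => if |t| < ρ ∧ ρ < R then
    ENNReal.ofReal (|x - t| ^ (-s) * ((1 + s) * ρ * (ρ ^ 2 - t ^ 2) ^ ((s - 1) / 2))) else 0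
  have hF : Measurable (Function.uncurry F) := by
    have m1 : MeasurableSet {p : ℝ × ℝ | |p.1| < p.2} :=
      measurableSet_lt (by fun_prop) (by fun_prop)
    have m2 : MeasurableSet {p : ℝ × ℝ | p.2 < R} := measurableSet_lt (by fun_prop) (by fun_prop)
    exact Measurable.ite (m1.inter m2) (by fun_prop) measurable_const
  have h1 : sPot s R x = ∫⁻ t, ∫⁻ ρ, F t ρ := by
    unfold sPot
    rw [← lintegral_indicator measurableSet_Ioo]
    refine lintegral_congr fun t => ?_
    by_cases ht : t ∈ Ioo (-R) R
    · rw [indicator_of_mem ht, ENNReal.ofReal_mul (by positivity), layer_cake hs0 (abs_lt.2 ht),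
        ← lintegral_const_mul' _ _ ENNReal.ofReal_ne_top, ← lintegral_indicator measurableSet_Ioo]
      refine lintegral_congr fun ρ => ?_
      by_cases hρ : ρ ∈ Ioo |t| R
      · rw [indicator_of_mem hρ, ← ENNReal.ofReal_mul (by positivity)]
        exact (if_pos hρ).symm
      · rw [indicator_of_notMem hρ]
        exact (if_neg hρ).symm
    · rw [indicator_of_notMem ht]
      symm
      rw [lintegral_eq_zero_iff (hF.of_uncurry_left)]
      refine Eventually.of_forall fun ρ => if_neg ?_
      rintro ⟨h2, h3⟩
      exact ht (abs_lt.1 (h2.trans h3))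
  rw [h1, lintegral_lintegral_swap hF.aemeasurable, ← lintegral_indicator measurableSet_Ioo]
  refine lintegral_congr fun ρ => ?_
  by_cases hρ : ρ ∈ Ioo 0 R
  · have hρ0 := hρ.1
    rw [indicator_of_mem hρ, eqPot, ← lintegral_const_mul' _ _ ENNReal.ofReal_ne_top,
      ← lintegral_indicator measurableSet_Ioo]
    refine lintegral_congr fun t => ?_
    by_cases ht : t ∈ Ioo (-ρ) ρ
    · rw [indicator_of_mem ht, ← ENNReal.ofReal_mul (by positivity)]
      refine (if_pos ⟨abs_lt.2 ht, hρ.2⟩).trans ?_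
      congr 1; ring
    · rw [indicator_of_notMem ht]
      refine if_neg fun h => ht (abs_lt.1 h.1)
  · rw [indicator_of_notMem hρ, lintegral_eq_zero_iff (hF.of_uncurry_right)]
    refine Eventually.of_forall fun t => if_neg ?_
    rintro ⟨h2, h3⟩
    exact hρ ⟨(abs_nonneg t).trans_lt h2, h3⟩

lemma eqPot_scale' (s : ℝ) {ρ : ℝ} (hρ : 0 < ρ) (x : ℝ) : eqPot s ρ x = eqPot s 1 (x / ρ) := by
  rw [← eqPot_scale s hρ, mul_div_cancel₀ _ hρ.ne']

lemma lintegral_ofReal_mul_kap {s a b : ℝ} (hs0 : 0 < s) (hs1 : s < 1) (ha : 0 ≤ a) (hab : a ≤ b) :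
    ∫⁻ ρ in Ioo a b, ENNReal.ofReal ((1 + s) * ρ) * ENNReal.ofReal (kap s) =
      ENNReal.ofReal ((1 + s) * kap s / 2 * (b ^ 2 - a ^ 2)) := by
  have hk := kap_pos hs0 hs1
  have h1 : ∀ ρ : ℝ, ENNReal.ofReal ((1 + s) * ρ) * ENNReal.ofReal (kap s) =
      ENNReal.ofReal ((1 + s) * kap s * ρ) := by
    intro ρ
    rw [← ENNReal.ofReal_mul' hk.le]; congr 1; ring
  simp_rw [h1]
  rw [← ofReal_integral_eq_lintegral_ofReal, ← integral_Ioc_eq_integral_Ioo,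
    ← intervalIntegral.integral_of_le hab]
  · rw [intervalIntegral.integral_const_mul, integral_id]
    congr 1; ring
  · exact (Continuous.integrableOn_Icc (by fun_prop)).mono_set Ioo_subset_Icc_self
  · refine (ae_restrict_iff' measurableSet_Ioo).2 (Eventually.of_forall fun ρ hρ => ?_)
    have : 0 ≤ ρ := ha.trans hρ.1.le
    show 0 ≤ (1 + s) * kap s * ρ
    positivity

lemma sPot_scale (s : ℝ) {R : ℝ} (hs0 : 0 < s) (hR : 0 < R) :
    sPot s R R = ENNReal.ofReal (R ^ 2) * sPot s 1 1 := by
  rw [sPot_eq hs0, sPot_eq hs0]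
  have h := lintegral_scale hR 0 1 (fun ρ => ENNReal.ofReal ((1 + s) * ρ) * eqPot s ρ R)
  rw [mul_zero, mul_one] at h
  rw [h, ← lintegral_const_mul' _ _ ENNReal.ofReal_ne_top,
    ← lintegral_const_mul' _ _ ENNReal.ofReal_ne_top]
  refine setLIntegral_congr_fun measurableSet_Ioo fun ρ hρ => ?_
  have h0 := hρ.1
  show ENNReal.ofReal _ * (ENNReal.ofReal _ * _) = ENNReal.ofReal _ * (ENNReal.ofReal _ * _)
  rw [eqPot_scale' s (by positivity), eqPot_scale' s h0,
    show R / (R * ρ) = 1 / ρ by field_simp, ← mul_assoc, ← mul_assoc,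
    ← ENNReal.ofReal_mul hR.le]
  rw [← mul_assoc (ENNReal.ofReal (R ^ 2)), ← ENNReal.ofReal_mul (by positivity)]
  congr 2; ring

/-- At the endpoint the potential is a Beta integral. -/
lemma sPot_one {s : ℝ} (hs0 : 0 < s) (hs1 : s < 1) :
    sPot s 1 1 = ENNReal.ofReal ((1 + s) * kap s / 2 * (1 - s)) := by
  have h := lintegral_beta_symm (a := (3 - s) / 2) (b := (3 + s) / 2) (by linarith) (by linarith)
  have hB : BetaR ((3 - s) / 2) ((3 + s) / 2) = (1 - s) / 2 * ((1 + s) / 2) * kap s / 2 := by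
    rw [BetaR, ← gamma_mul_kap, show (3 - s) / 2 = (1 - s) / 2 + 1 by ring,
      show (3 + s) / 2 = (1 + s) / 2 + 1 by ring, Real.Gamma_add_one (by linarith),
      Real.Gamma_add_one (by linarith),
      show (1 - s) / 2 + 1 + ((1 + s) / 2 + 1) = ((2:ℕ):ℝ) + 1 by push_cast; ring, Real.Gamma_nat_eq_factorial]
    norm_num [Nat.factorial]; ring
  rw [hB, show (3 - s) / 2 + (3 + s) / 2 - 1 = ((2:ℕ):ℝ) by push_cast; ring, Real.rpow_natCast] at h
  rw [show (1 + s) * kap s / 2 * (1 - s) = 2 ^ 2 * ((1 - s) / 2 * ((1 + s) / 2) * kap s / 2) by ring,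
    ← h]
  refine setLIntegral_congr_fun measurableSet_Ioo fun t ht => ?_
  have h1 : 0 < 1 - t := by linarith [ht.2]
  have h2 : 0 < 1 + t := by linarith [ht.1]
  show ENNReal.ofReal _ = ENNReal.ofReal _
  rw [show (1:ℝ) ^ 2 - t ^ 2 = (1 - t) * (1 + t) by ring, Real.mul_rpow h1.le h2.le, ← mul_assoc,
    abs_of_pos h1, ← Real.rpow_add h1]
  congr 3 <;> ring

/-- Inside the support the potential is an explicit downward parabola. -/
lemma sPot_inside {s R x : ℝ} (hs0 : 0 < s) (hs1 : s < 1) (hx : |x| ≤ R) (hR : 0 < R) :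
    sPot s R x = ENNReal.ofReal ((1 + s) * kap s / 2 * (R ^ 2 - s * x ^ 2)) := by
  have hk := kap_pos hs0 hs1
  have hsplit : sPot s R x = ENNReal.ofReal ((1 + s) * kap s / 2 * (1 - s) * x ^ 2) +
      ENNReal.ofReal ((1 + s) * kap s / 2 * (R ^ 2 - |x| ^ 2)) := by
    have hd : Disjoint (Ioo 0 |x|) (Ico |x| R) := by
      rw [Set.disjoint_left]; rintro y ⟨_, h⟩ ⟨h', _⟩; linarith
    have h2 : ∫⁻ ρ in Ioo 0 |x|, ENNReal.ofReal ((1 + s) * ρ) * eqPot s ρ x =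
        ENNReal.ofReal ((1 + s) * kap s / 2 * (1 - s) * x ^ 2) := by
      rcases (abs_nonneg x).eq_or_lt with h | h
      · have : x = 0 := abs_eq_zero.1 h.symm
        simp [this]
      · simp_rw [← eqPot_abs s _ x]
        rw [← sPot_eq hs0, sPot_scale s hs0 h, sPot_one hs0 hs1, ← ENNReal.ofReal_mul (by positivity),
          sq_abs]
        congr 1; ring
    have h3 : ∫⁻ ρ in Ioo |x| R, ENNReal.ofReal ((1 + s) * ρ) * eqPot s ρ x =
        ENNReal.ofReal ((1 + s) * kap s / 2 * (R ^ 2 - |x| ^ 2)) := by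
      rw [← lintegral_ofReal_mul_kap hs0 hs1 (abs_nonneg x) hx]
      refine setLIntegral_congr_fun measurableSet_Ioo fun ρ hρ => ?_
      have h0 : 0 < ρ := (abs_nonneg x).trans_lt hρ.1
      show _ * eqPot s ρ x = _
      rw [eqPot_scale' s h0, eqPot_inside hs0 hs1]
      rw [abs_div, abs_of_pos h0, div_lt_one h0]; exact hρ.1
    rcases (abs_nonneg x).eq_or_lt with h | h
    · rw [sPot_eq hs0, ← h3, ← h]
      have : x = 0 := abs_eq_zero.1 h.symm
      simp [this]
    · rw [sPot_eq hs0, ← Ioo_union_Ico_eq_Ioo h hx, lintegral_union measurableSet_Ico hd, h2,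
        (setLIntegral_congr (Ioo_ae_eq_Ico (a := |x|) (b := R))).symm, h3]
  rw [hsplit, ← ENNReal.ofReal_add]
  · congr 1; rw [sq_abs]; ring
  · have : 0 < 1 - s := by linarith
    positivity
  · have : 0 ≤ R ^ 2 - |x| ^ 2 := by nlinarith [abs_nonneg x]
    positivity

/-- Everywhere the potential dominates that parabola. -/
lemma sPot_outside {s R x : ℝ} (hs0 : 0 < s) (hs1 : s < 1) (hR : 0 < R) :
    ENNReal.ofReal ((1 + s) * kap s / 2 * R ^ 2) ≤
      sPot s R x + ENNReal.ofReal ((1 + s) * kap s / 2 * s * x ^ 2) := by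
  have hk := kap_pos hs0 hs1
  have hs2 : 0 < 1 - s := by linarith
  rcases le_or_gt |x| R with hx | hx
  · have : x ^ 2 ≤ R ^ 2 := sq_le_sq' (by linarith [neg_abs_le x]) ((le_abs_self x).trans hx)
    have h4 : 0 ≤ R ^ 2 - s * x ^ 2 := by nlinarith [sq_nonneg x]
    rw [sPot_inside hs0 hs1 hx hR, ← ENNReal.ofReal_add (by positivity) (by positivity)]
    apply ENNReal.ofReal_le_ofReal; apply le_of_eq; ring
  · have hx0 : 0 < |x| := hR.trans hx
    have hd : Disjoint (Ioo 0 R) (Ico R |x|) := by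
      rw [Set.disjoint_left]; rintro y ⟨_, h⟩ ⟨h', _⟩; linarith
    have h1 : sPot s |x| x = ENNReal.ofReal ((1 + s) * kap s / 2 * (|x| ^ 2 - s * x ^ 2)) :=
      sPot_inside hs0 hs1 le_rfl hx0
    have h2 : sPot s |x| x ≤ sPot s R x +
        ENNReal.ofReal ((1 + s) * kap s / 2 * (|x| ^ 2 - R ^ 2)) := by
      rw [sPot_eq hs0, sPot_eq hs0, ← Ioo_union_Ico_eq_Ioo hR hx.le,
        lintegral_union measurableSet_Ico hd,
        (setLIntegral_congr (Ioo_ae_eq_Ico (a := R) (b := |x|))).symm,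
        ← lintegral_ofReal_mul_kap hs0 hs1 hR.le hx.le]
      refine add_le_add le_rfl (setLIntegral_mono' measurableSet_Ioo fun ρ hρ => ?_)
      rw [eqPot_scale' s (hR.trans hρ.1)]
      gcongr
      exact eqPot_le hs0 hs1
    have h3 : ENNReal.ofReal ((1 + s) * kap s / 2 * R ^ 2) +
        ENNReal.ofReal ((1 + s) * kap s / 2 * (|x| ^ 2 - R ^ 2)) ≤
        (sPot s R x + ENNReal.ofReal ((1 + s) * kap s / 2 * s * x ^ 2)) +
        ENNReal.ofReal ((1 + s) * kap s / 2 * (|x| ^ 2 - R ^ 2)) := by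
      have h5 : 0 ≤ |x| ^ 2 - R ^ 2 := by nlinarith
      have h6 : 0 ≤ |x| ^ 2 - s * x ^ 2 := by rw [sq_abs]; nlinarith [sq_nonneg x]
      calc _ = sPot s |x| x + ENNReal.ofReal ((1 + s) * kap s / 2 * s * x ^ 2) := by
            rw [h1, ← ENNReal.ofReal_add (by positivity) (by positivity),
              ← ENNReal.ofReal_add (by positivity) (by positivity)]
            congr 1; ring
        _ ≤ _ := by
            rw [add_right_comm]; gcongr
    exact (ENNReal.add_le_add_iff_right ENNReal.ofReal_ne_top).1 h3

/-! ### The measure `ρ₁` and its Euler–Lagrange conditions -/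

/-- Legendre duplication formula, in terms of the Beta function. -/
lemma betaR_dup {a : ℝ} (ha : 0 < a) :
    2 ^ (a + a - 1) * BetaR a a = BetaR (1 / 2) a := by
  have h := Real.Gamma_mul_Gamma_add_half a
  have h1 := Real.Gamma_pos_of_pos ha
  have h2 := Real.Gamma_pos_of_pos (show 0 < a + 1 / 2 by linarith)
  have h3 := Real.Gamma_pos_of_pos (show 0 < 2 * a by linarith)
  have h4 : (2:ℝ) ^ (1 - 2 * a) * 2 ^ (a + a - 1) = 1 := by
    rw [← Real.rpow_add two_pos, show 1 - 2 * a + (a + a - 1) = 0 by ring, Real.rpow_zero]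
  have h5 : (0:ℝ) < 2 ^ (a + a - 1) := by positivity
  unfold BetaR
  rw [Real.Gamma_one_half_eq, show 1 / 2 + a = a + 1 / 2 by ring, show a + a = 2 * a by ring] at *
  rw [mul_div_assoc', div_eq_div_iff h3.ne' h2.ne']
  calc 2 ^ (2 * a - 1) * (Real.Gamma a * Real.Gamma a) * Real.Gamma (a + 1 / 2)
      = 2 ^ (2 * a - 1) * Real.Gamma a * (Real.Gamma a * Real.Gamma (a + 1 / 2)) := by ring
    _ = (2 ^ (1 - 2 * a) * 2 ^ (2 * a - 1)) * (√π * Real.Gamma a * Real.Gamma (2 * a)) := by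
        rw [h]; ring
    _ = _ := by rw [h4, one_mul]

lemma C1_pos {s : ℝ} (hs0 : 0 < s) (hs1 : s < 1) : 0 < C1 s := by
  have := cos_pos_s hs0 hs1
  have := Real.pi_pos
  unfold C1; positivity

/-- The constant `C₁` is the one that gives `ρ₁` the potential `const - t²` on its support. -/
lemma C1_kap {s : ℝ} (hs0 : 0 < s) (hs1 : s < 1) : C1 s * ((1 + s) * kap s / 2 * s) = 1 := by
  have := cos_pos_s hs0 hs1
  have := Real.pi_pos
  unfold C1 kap; field_simp; ring

lemma betaR_pos {s : ℝ} (hs0 : 0 < s) : 0 < BetaR (1 / 2) ((3 + s) / 2) :=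
  ProbabilityTheory.beta_pos (by norm_num) (by linarith)

lemma R1_pos {s : ℝ} (hs0 : 0 < s) (hs1 : s < 1) : 0 < R1 s := by
  have := C1_pos hs0 hs1
  have := betaR_pos hs0
  unfold R1; positivity

/-- The radius `R₁` is the one that gives `ρ₁` total mass one. -/
lemma R1_rpow {s : ℝ} (hs0 : 0 < s) (hs1 : s < 1) :
    C1 s * (R1 s ^ (2 + s) * BetaR (1 / 2) ((3 + s) / 2)) = 1 := by
  have h1 := C1_pos hs0 hs1
  have h2 := betaR_pos hs0
  rw [R1, ← Real.rpow_mul (by positivity),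
    show -(1 / (s + 2)) * (2 + s) = -1 by field_simp; ring, Real.rpow_neg_one]
  field_simp

lemma rho1_eq {s t : ℝ} (ht : t ∈ Ioo (-R1 s) (R1 s)) :
    rho1 s t = C1 s * (R1 s ^ 2 - t ^ 2) ^ ((1 + s) / 2) := by
  rw [rho1, max_eq_left]
  nlinarith [ht.1, ht.2]

lemma rho1_eq_zero {s t : ℝ} (hs0 : 0 < s) (hs1 : s < 1) (ht : t ∉ Ioo (-R1 s) (R1 s)) :
    rho1 s t = 0 := by
  have hR := R1_pos hs0 hs1
  rw [rho1, max_eq_right, Real.zero_rpow (by linarith), mul_zero]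
  by_contra! h
  exact ht (abs_lt.1 (abs_lt_of_sq_lt_sq (by linarith) hR.le))

lemma measurable_rho1 (s : ℝ) : Measurable fun t => ENNReal.ofReal (rho1 s t) := by
  unfold rho1; fun_prop

lemma lintegral_rho1meas {s : ℝ} (hs0 : 0 < s) (hs1 : s < 1) {F : ℝ → ℝ≥0∞} (hF : Measurable F) :
    ∫⁻ t, F t ∂(rho1meas s) = ENNReal.ofReal (C1 s) *
      ∫⁻ t in Ioo (-R1 s) (R1 s), ENNReal.ofReal ((R1 s ^ 2 - t ^ 2) ^ ((1 + s) / 2)) * F t := by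
  rw [rho1meas, lintegral_withDensity_eq_lintegral_mul _ (measurable_rho1 s) hF,
    ← lintegral_const_mul' _ _ ENNReal.ofReal_ne_top, ← lintegral_indicator measurableSet_Ioo]
  refine lintegral_congr fun t => ?_
  by_cases ht : t ∈ Ioo (-R1 s) (R1 s)
  · rw [indicator_of_mem ht, Pi.mul_apply, rho1_eq ht, ENNReal.ofReal_mul (C1_pos hs0 hs1).le,
      mul_assoc]
  · rw [indicator_of_notMem ht, Pi.mul_apply, rho1_eq_zero hs0 hs1 ht]; simp

lemma isProb_rho1meas {s : ℝ} (hs0 : 0 < s) (hs1 : s < 1) : IsProbabilityMeasure (rho1meas s) := by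
  constructor
  have hR := R1_pos hs0 hs1
  have h := lintegral_rho1meas hs0 hs1 (F := fun _ => 1) measurable_const
  rw [lintegral_one] at h
  have h0 : (1 : ℝ≥0∞) = ENNReal.ofReal (C1 s) *
      ENNReal.ofReal (R1 s ^ (2 + s) * BetaR (1 / 2) ((3 + s) / 2)) := by
    rw [← ENNReal.ofReal_mul (C1_pos hs0 hs1).le, R1_rpow hs0 hs1, ENNReal.ofReal_one]
  refine h.trans (Eq.trans ?_ h0.symm)
  congr 1
  have h2 := lintegral_scale hR (-1) 1
    (fun t => ENNReal.ofReal ((R1 s ^ 2 - t ^ 2) ^ ((1 + s) / 2)) * 1)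
  rw [mul_one, mul_neg, mul_one] at h2
  rw [h2, ← betaR_dup (by linarith), ENNReal.ofReal_mul (by positivity),
    ← lintegral_beta_symm (by linarith) (by linarith), ← lintegral_const_mul' _ _ ENNReal.ofReal_ne_top,
    ← lintegral_const_mul' _ _ ENNReal.ofReal_ne_top]
  refine setLIntegral_congr_fun measurableSet_Ioo fun t ht => ?_
  have h1 : 0 < 1 - t := by linarith [ht.2]
  have h2 : 0 < 1 + t := by linarith [ht.1]
  show ENNReal.ofReal _ * (ENNReal.ofReal _ * 1) = ENNReal.ofReal _ * ENNReal.ofReal _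
  rw [mul_one, ← ENNReal.ofReal_mul hR.le, ← ENNReal.ofReal_mul (by positivity),
    show R1 s ^ 2 - (R1 s * t) ^ 2 = R1 s ^ (2:ℝ) * ((1 - t) * (1 + t)) by
      rw [Real.rpow_two]; ring,
    Real.mul_rpow (by positivity) (by positivity), Real.mul_rpow h1.le h2.le,
    ← Real.rpow_mul hR.le, show (2:ℝ) * ((1 + s) / 2) = 1 + s by ring,
    show (2:ℝ) + s = 1 + (1 + s) by ring, Real.rpow_add hR 1 (1 + s), Real.rpow_one,
    show (3 + s) / 2 - 1 = (1 + s) / 2 by ring]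
  congr 1; ring

lemma ae_rho1meas {s : ℝ} (hs0 : 0 < s) (hs1 : s < 1) : ∀ᵐ t ∂(rho1meas s), |t| < R1 s := by
  rw [rho1meas, ae_withDensity_iff (measurable_rho1 s)]
  refine Eventually.of_forall fun t ht => ?_
  by_contra h
  exact ht (by rw [rho1_eq_zero hs0 hs1 (fun h' => h (abs_lt.2 h')), ENNReal.ofReal_zero])

lemma mean_rho1meas {s : ℝ} (hs0 : 0 < s) (hs1 : s < 1) :
    ∫ t, t ∂(rho1meas s) = 0 := by
  have h1 : ∫ t, t ∂(rho1meas s) = ∫ t, rho1 s t * t := by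
    rw [rho1meas, integral_withDensity_eq_integral_toReal_smul (measurable_rho1 s)
      (Eventually.of_forall fun _ => ENNReal.ofReal_lt_top)]
    refine integral_congr_ae (Eventually.of_forall fun t => ?_)
    show (ENNReal.ofReal _).toReal • t = _
    rw [ENNReal.toReal_ofReal, smul_eq_mul]
    have := C1_pos hs0 hs1
    unfold rho1; positivity
  have h2 : ∫ t, rho1 s t * t = - ∫ t, rho1 s t * t := by
    rw [← integral_neg, ← integral_neg_eq_self]
    refine integral_congr_ae (Eventually.of_forall fun t => ?_)
    simp [rho1]
  rw [h1]; linarith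

/-- The repulsive kernel `|t|^{-s}` on the line, infinite at the origin. -/
def kk (s t : ℝ) : ℝ≥0∞ := if t = 0 then ⊤ else ENNReal.ofReal (|t| ^ (-s))

@[fun_prop] lemma measurable_kk (s : ℝ) : Measurable (kk s) :=
  Measurable.ite (measurableSet_singleton 0) measurable_const (by fun_prop)

lemma pot_eq {s : ℝ} (hs0 : 0 < s) (hs1 : s < 1) (x : ℝ) :
    ∫⁻ t, kk s (x - t) ∂(rho1meas s) = ENNReal.ofReal (C1 s) * sPot s (R1 s) x := by
  rw [lintegral_rho1meas hs0 hs1 (by fun_prop)]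
  congr 1
  unfold sPot
  have hne : ∀ᵐ t : ℝ, t ≠ x := by
    rw [ae_iff]; simp
  refine setLIntegral_congr_fun_ae measurableSet_Ioo ?_
  filter_upwards [hne] with t h ht
  rw [kk, if_neg (sub_ne_zero.2 h.symm), ← ENNReal.ofReal_mul, mul_comm]
  have : 0 ≤ R1 s ^ 2 - t ^ 2 := by nlinarith [ht.1, ht.2]
  positivity

/-- Euler–Lagrange equality on the support of `ρ₁`. -/
lemma pot_inside {s x : ℝ} (hs0 : 0 < s) (hs1 : s < 1) (hx : |x| ≤ R1 s) :
    (∫⁻ t, kk s (x - t) ∂(rho1meas s)) + ENNReal.ofReal (x ^ 2) =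
      ENNReal.ofReal (R1 s ^ 2 / s) := by
  have hR := R1_pos hs0 hs1
  have hC := C1_pos hs0 hs1
  have hk := kap_pos hs0 hs1
  have : x ^ 2 ≤ R1 s ^ 2 := sq_le_sq' (by linarith [neg_abs_le x]) ((le_abs_self x).trans hx)
  have h4 : 0 ≤ R1 s ^ 2 - s * x ^ 2 := by nlinarith [sq_nonneg x]
  rw [pot_eq hs0 hs1, sPot_inside hs0 hs1 hx hR, ← ENNReal.ofReal_mul hC.le,
    ← ENNReal.ofReal_add (by positivity) (by positivity)]
  congr 1
  have h := C1_kap hs0 hs1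
  have h' : C1 s * ((1 + s) * kap s / 2) = 1 / s := by field_simp; linarith
  rw [← mul_assoc, h']; field_simp; ring

/-- Euler–Lagrange inequality on the whole line. -/
lemma pot_outside {s : ℝ} (hs0 : 0 < s) (hs1 : s < 1) (x : ℝ) :
    ENNReal.ofReal (R1 s ^ 2 / s) ≤
      (∫⁻ t, kk s (x - t) ∂(rho1meas s)) + ENNReal.ofReal (x ^ 2) := by
  have hR := R1_pos hs0 hs1
  have hC := C1_pos hs0 hs1
  have hk := kap_pos hs0 hs1
  have h := C1_kap hs0 hs1
  have h' : C1 s * ((1 + s) * kap s / 2) = 1 / s := by field_simp; linarith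
  have h1 := mul_le_mul_right (sPot_outside (x := x) hs0 hs1 hR) (ENNReal.ofReal (C1 s))
  rw [mul_add, ← ENNReal.ofReal_mul hC.le, ← ENNReal.ofReal_mul hC.le] at h1
  rw [pot_eq hs0 hs1]
  convert h1 using 3
  · rw [← mul_assoc, h']; ring
  · rw [← mul_assoc, h, one_mul]

/-! ### Positive definiteness of the kernel `|t|^{-s}` -/

/-- The one-sided power `t₊^{-β}`, equal to `0` for `t ≤ 0` when `β ≠ 0`. -/
def qq (β t : ℝ) : ℝ≥0∞ := ENNReal.ofReal ((max t 0) ^ (-β))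

@[fun_prop] lemma measurable_qq (β : ℝ) : Measurable (qq β) := by
  unfold qq; fun_prop

lemma qq_of_nonpos {β t : ℝ} (hβ : 0 < β) (ht : t ≤ 0) : qq β t = 0 := by
  rw [qq, max_eq_right ht, Real.zero_rpow (by linarith), ENNReal.ofReal_zero]

lemma qq_of_pos {β t : ℝ} (ht : 0 < t) : qq β t = ENNReal.ofReal (t ^ (-β)) := by
  rw [qq, max_eq_left ht.le]

lemma qq_mul {β a : ℝ} (ha : 0 < a) (t : ℝ) :
    qq β (a * t) = ENNReal.ofReal (a ^ (-β)) * qq β t := by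
  rw [qq, qq, ← ENNReal.ofReal_mul (by positivity), ← Real.mul_rpow ha.le (le_max_right _ _),
    mul_max_of_nonneg _ _ ha.le, mul_zero]

lemma lintegral_dilate {a : ℝ} (ha : 0 < a) (F : ℝ → ℝ≥0∞) :
    ∫⁻ x, F x = ENNReal.ofReal a * ∫⁻ y, F (a * y) := by
  have h := lintegral_subst (S := univ) (T := univ) MeasurableSet.univ (fun y => a * y) (fun _ => a)
    (fun x => x / a) (fun y _ => by simpa using (hasDerivAt_id y).const_mul a)
    (by simp) (by simp) (fun y _ => by field_simp) (fun y _ => by field_simp) F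
  rw [abs_of_pos ha, lintegral_const_mul' _ _ ENNReal.ofReal_ne_top] at h
  simpa using h

/-- The constant relating `|t|^{-s}` to the autocorrelation of `t₊^{-(1+s)/2}`. -/
def c0 (s : ℝ) : ℝ≥0∞ := ∫⁻ w, qq ((1 + s) / 2) (1 + w) * qq ((1 + s) / 2) w

lemma c0_ne_zero (s : ℝ) : c0 s ≠ 0 := by
  refine ((lintegral_pos_iff_support (by fun_prop)).2 ?_).ne'
  have : Ioo (0:ℝ) 1 ⊆ Function.support fun w => qq ((1 + s) / 2) (1 + w) * qq ((1 + s) / 2) w := by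
    intro w hw
    have h1 := hw.1
    rw [Function.mem_support, qq_of_pos h1, qq_of_pos (by linarith)]
    refine (ENNReal.mul_pos ?_ ?_).ne' <;> rw [← pos_iff_ne_zero, ENNReal.ofReal_pos] <;> positivity
  refine lt_of_lt_of_le ?_ (measure_mono this)
  simp

lemma c0_ne_top {s : ℝ} (hs0 : 0 < s) (hs1 : s < 1) : c0 s ≠ ⊤ := by
  have h1 : ∫⁻ w in Ioc (0:ℝ) 1, ENNReal.ofReal (w ^ (-((1 + s) / 2))) < ⊤ := by
    have : IntegrableOn (fun w : ℝ => w ^ (-((1 + s) / 2))) (Ioc 0 1) :=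
      (intervalIntegrable_iff_integrableOn_Ioc_of_le zero_le_one).1
        (intervalIntegral.intervalIntegrable_rpow' (by linarith))
    exact this.lintegral_lt_top
  have h2 : ∫⁻ w in Ioi (1:ℝ), ENNReal.ofReal (w ^ (-(1 + s))) < ⊤ :=
    (integrableOn_Ioi_rpow_of_lt (by linarith) one_pos).lintegral_lt_top
  have h3 : c0 s ≤ (∫⁻ w in Ioc (0:ℝ) 1, ENNReal.ofReal (w ^ (-((1 + s) / 2)))) +
      ∫⁻ w in Ioi (1:ℝ), ENNReal.ofReal (w ^ (-(1 + s))) := by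
    rw [← lintegral_indicator measurableSet_Ioc, ← lintegral_indicator measurableSet_Ioi,
      ← lintegral_add_left (by measurability)]
    refine lintegral_mono fun w => ?_
    rcases le_or_gt w 0 with h | h
    · rw [qq_of_nonpos (by linarith) h, mul_zero]; exact zero_le
    rw [qq_of_pos h, qq_of_pos (by linarith), ← ENNReal.ofReal_mul (by positivity)]
    rcases le_or_gt w 1 with h' | h'
    · rw [indicator_of_mem (show w ∈ Ioc 0 1 from ⟨h, h'⟩)]
      refine le_add_right (ENNReal.ofReal_le_ofReal ?_)
      refine mul_le_of_le_one_left (by positivity) ?_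
      exact Real.rpow_le_one_of_one_le_of_nonpos (by linarith) (by linarith)
    · rw [indicator_of_mem (show w ∈ Ioi 1 from h')]
      refine le_add_left (ENNReal.ofReal_le_ofReal ?_)
      rw [show -(1 + s) = -((1 + s) / 2) + -((1 + s) / 2) by ring, Real.rpow_add h]
      gcongr ?_ * _
      exact Real.rpow_le_rpow_of_nonpos h (by linarith) (by linarith)
  exact (h3.trans_lt (ENNReal.add_lt_top.2 ⟨h1, h2⟩)).ne

/-- Factorization of the kernel `|t|^{-s}`; both sides are infinite at the origin. -/
lemma kk_factor_aux {s a : ℝ} (ha : 0 ≤ a) :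
    ∫⁻ w, qq ((1 + s) / 2) (a + w) * qq ((1 + s) / 2) w = c0 s * kk s a := by
  rcases ha.eq_or_lt with rfl | ha
  · rw [kk, if_pos rfl, ENNReal.mul_top (c0_ne_zero s)]
    by_contra h
    have h1 : ∫⁻ w in Ioi (0:ℝ), ENNReal.ofReal (w ^ (-(1 + s))) ≤
        ∫⁻ w, qq ((1 + s) / 2) (0 + w) * qq ((1 + s) / 2) w := by
      rw [← lintegral_indicator measurableSet_Ioi]
      refine lintegral_mono fun w => ?_
      by_cases hw : w ∈ Ioi 0
      · rw [indicator_of_mem hw, zero_add, qq_of_pos hw, ← ENNReal.ofReal_mul (by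
          have : 0 < w := hw
          positivity), ← Real.rpow_add hw]
        apply le_of_eq; congr 2; ring
      · rw [indicator_of_notMem hw]; exact zero_le
    refine not_integrableOn_Ioi_rpow (-(1 + s)) ?_
    refine (lintegral_ofReal_ne_top_iff_integrable (by fun_prop) ?_).1
      (ne_top_of_le_ne_top h h1)
    refine (ae_restrict_iff' measurableSet_Ioi).2 (Eventually.of_forall fun w hw => ?_)
    have : 0 < w := hw
    show 0 ≤ w ^ (-(1 + s))
    positivity
  · rw [kk, if_neg ha.ne', lintegral_dilate ha, c0, mul_comm _ (ENNReal.ofReal _),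
      ← lintegral_const_mul' _ _ ENNReal.ofReal_ne_top,
      ← lintegral_const_mul' _ _ ENNReal.ofReal_ne_top]
    refine lintegral_congr fun w => ?_
    rw [show a + a * w = a * (1 + w) by ring, qq_mul ha, qq_mul ha, abs_of_pos ha,
      show -s = 1 + (-((1 + s) / 2) + -((1 + s) / 2)) by ring, Real.rpow_add ha 1,
      Real.rpow_add ha, Real.rpow_one, ENNReal.ofReal_mul ha.le, ENNReal.ofReal_mul (by positivity)]
    ring

/-- The kernel `|t - t'|^{-s}` is, up to the constant `c0`, the overlap of two one-sided powers. -/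
lemma kk_factor (s t t' : ℝ) :
    ∫⁻ z, qq ((1 + s) / 2) (t - z) * qq ((1 + s) / 2) (t' - z) = c0 s * kk s (t - t') := by
  wlog h : t' ≤ t generalizing t t'
  · have := this t' t (by linarith)
    rw [show kk s (t - t') = kk s (t' - t) by
      unfold kk; rw [abs_sub_comm]; simp only [sub_eq_zero, eq_comm], ← this]
    exact lintegral_congr fun z => mul_comm _ _
  rw [← kk_factor_aux (sub_nonneg.2 h), ← lintegral_sub_left_eq_self _ t']
  refine lintegral_congr fun z => ?_
  rw [show t - (t' - z) = t - t' + z by ring, sub_sub_cancel]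

/-- The normalizing constant of the Abel inversion. -/
def d0 (s : ℝ) : ℝ≥0∞ := ENNReal.ofReal (kap s)

/-- Abel inversion: `t₊^{-(1-s)/2}` and `t₊^{-(1+s)/2}` convolve to a multiple of the Heaviside
function. -/
lemma abel {s : ℝ} (hs0 : 0 < s) (hs1 : s < 1) (w t : ℝ) :
    ∫⁻ z, qq ((1 - s) / 2) (z - w) * qq ((1 + s) / 2) (t - z) =
      d0 s * (Ioi w).indicator (fun _ => 1) t := by
  by_cases ht : t ∈ Ioi w
  · have ha : 0 < t - w := sub_pos.2 ht
    rw [indicator_of_mem ht, mul_one, d0, ← mul_one (kap s), mul_comm (kap s), ← betaR_kap s]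
    have hc : BetaR ((1 - s) / 2) ((1 + s) / 2) = BetaR ((1 + s) / 2) ((1 - s) / 2) := by
      unfold BetaR; rw [mul_comm, add_comm ((1 - s) / 2)]
    rw [hc, one_mul, ← lintegral_beta (by linarith) (by linarith),
      ← lintegral_indicator measurableSet_Ioo, ← lintegral_add_right_eq_self _ w, lintegral_dilate ha,
      ← lintegral_const_mul' _ _ ENNReal.ofReal_ne_top]
    refine lintegral_congr fun v => ?_
    rw [show (t - w) * v + w - w = (t - w) * v by ring,
      show t - ((t - w) * v + w) = (t - w) * (1 - v) by ring, qq_mul ha, qq_mul ha]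
    have h1 : ENNReal.ofReal (t - w) * (ENNReal.ofReal ((t - w) ^ (-((1 - s) / 2))) *
        ENNReal.ofReal ((t - w) ^ (-((1 + s) / 2)))) = 1 := by
      rw [← ENNReal.ofReal_mul (by positivity), ← ENNReal.ofReal_mul ha.le, ← Real.rpow_add ha,
        ← ENNReal.ofReal_one]
      congr 1
      rw [show -((1 - s) / 2) + -((1 + s) / 2) = -1 by ring, Real.rpow_neg_one]
      field_simp
    have h2 : ∀ A B C D E : ℝ≥0∞, A * (B * C * (D * E)) = (A * (B * D)) * (C * E) := by
      intros; ring
    rw [h2, h1, one_mul]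
    by_cases hv : v ∈ Ioo 0 1
    · have := hv.1
      have h3 : 0 < 1 - v := by linarith [hv.2]
      rw [indicator_of_mem hv, qq_of_pos hv.1, qq_of_pos h3, ← ENNReal.ofReal_mul (by positivity)]
      congr 3 <;> ring
    · rw [indicator_of_notMem hv]
      rcases le_or_gt v 0 with h | h
      · rw [qq_of_nonpos (by linarith) h, zero_mul]
      · rw [qq_of_nonpos (t := 1 - v) (by linarith), mul_zero]
        by_contra h'; exact hv ⟨h, by linarith⟩
  · rw [indicator_of_notMem ht, mul_zero]
    rw [lintegral_eq_zero_iff (by fun_prop)]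
    refine Eventually.of_forall fun z => ?_
    show _ * _ = (0 : ℝ≥0∞)
    rcases le_or_gt z w with h | h
    · rw [qq_of_nonpos (by linarith) (by linarith), zero_mul]
    · have : t ≤ w := not_lt.1 ht
      rw [qq_of_nonpos (t := t - z) (by linarith) (by linarith), mul_zero]

/-- The half-order potential of a measure. -/
def JJ (s : ℝ) (μ : Measure ℝ) (z : ℝ) : ℝ≥0∞ := ∫⁻ t, qq ((1 + s) / 2) (t - z) ∂μ

@[fun_prop] lemma measurable_JJ (s : ℝ) (μ : Measure ℝ) [SFinite μ] : Measurable (JJ s μ) := by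
  unfold JJ
  exact Measurable.lintegral_prod_right' (f := fun p : ℝ × ℝ => qq ((1 + s) / 2) (p.2 - p.1))
    (by fun_prop)

/-- The mutual interaction energy of two measures for the kernel `|t|^{-s}`. -/
def II (s : ℝ) (μ ν : Measure ℝ) : ℝ≥0∞ := ∫⁻ t, ∫⁻ t', kk s (t - t') ∂ν ∂μ

/-- The interaction is the `L²` pairing of the half-order potentials. -/
lemma II_eq {s : ℝ} (hs0 : 0 < s) (hs1 : s < 1) (μ ν : Measure ℝ) [SFinite μ] [SFinite ν] :
    c0 s * II s μ ν = ∫⁻ z, JJ s μ z * JJ s ν z := by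
  have hc := c0_ne_top hs0 hs1
  have h1 : ∀ t, c0 s * ∫⁻ t', kk s (t - t') ∂ν =
      ∫⁻ z, qq ((1 + s) / 2) (t - z) * JJ s ν z := by
    intro t
    rw [← lintegral_const_mul' _ _ hc]
    simp_rw [← kk_factor s]
    rw [lintegral_lintegral_swap
      (f := fun t' z => qq ((1 + s) / 2) (t - z) * qq ((1 + s) / 2) (t' - z)) (by
        apply Measurable.aemeasurable; unfold Function.uncurry; fun_prop)]
    refine lintegral_congr fun z => ?_
    rw [lintegral_const_mul _ (by fun_prop), JJ]
  rw [II, ← lintegral_const_mul' _ _ hc]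
  simp_rw [h1]
  rw [lintegral_lintegral_swap (f := fun t z => qq ((1 + s) / 2) (t - z) * JJ s ν z) (by
        apply Measurable.aemeasurable; unfold Function.uncurry; fun_prop)]
  refine lintegral_congr fun z => ?_
  rw [lintegral_mul_const _ (by fun_prop)]
  rfl

lemma ennreal_two_mul_le (a b : ℝ≥0∞) : 2 * (a * b) ≤ a * a + b * b := by
  induction a with
  | top => simp
  | coe a =>
    induction b with
    | top => simp
    | coe b =>
      norm_cast
      have := two_mul_le_add_sq a b
      rw [mul_assoc] at this
      simpa [sq] using this

lemma ennreal_eq_of_two_mul {a b : ℝ≥0∞} (ha : a * a ≠ ⊤) (hb : b * b ≠ ⊤)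
    (h : 2 * (a * b) = a * a + b * b) : a = b := by
  induction a with
  | top => simp at ha
  | coe a =>
    induction b with
    | top => simp at hb
    | coe b =>
      norm_cast at h ⊢
      have h' : (2:ℝ) * (a * b) = a * a + b * b := by exact_mod_cast h
      have : ((a:ℝ) - b) ^ 2 = 0 := by nlinarith
      exact NNReal.coe_injective (sub_eq_zero.1 (pow_eq_zero_iff two_ne_zero |>.1 this))

/-- Positive semidefiniteness of the interaction energy. -/
lemma II_cross_le {s : ℝ} (hs0 : 0 < s) (hs1 : s < 1) (μ ν : Measure ℝ) [SFinite μ] [SFinite ν] :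
    2 * II s μ ν ≤ II s μ μ + II s ν ν := by
  rw [← ENNReal.mul_le_mul_iff_right (c0_ne_zero s) (c0_ne_top hs0 hs1), mul_add,
    mul_left_comm, II_eq hs0 hs1, II_eq hs0 hs1, II_eq hs0 hs1, ← lintegral_add_left (by fun_prop),
    ← lintegral_const_mul' _ _ (by norm_num)]
  exact lintegral_mono fun z => ennreal_two_mul_le _ _

/-- Definiteness of the interaction energy: equality forces the half-order potentials to agree almost
everywhere, and Abel inversion recovers the distribution functions from them. -/
lemma eq_of_II {s : ℝ} (hs0 : 0 < s) (hs1 : s < 1) (μ ν : Measure ℝ) [IsProbabilityMeasure μ]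
    [IsProbabilityMeasure ν] (hμ : II s μ μ ≠ ⊤) (hν : II s ν ν ≠ ⊤)
    (h : II s μ μ + II s ν ν ≤ 2 * II s μ ν) : μ = ν := by
  have hc := c0_ne_top hs0 hs1
  have fμ : ∫⁻ z, JJ s μ z * JJ s μ z ≠ ⊤ := by
    rw [← II_eq hs0 hs1]; exact ENNReal.mul_ne_top hc hμ
  have fν : ∫⁻ z, JJ s ν z * JJ s ν z ≠ ⊤ := by
    rw [← II_eq hs0 hs1]; exact ENNReal.mul_ne_top hc hν
  have h2 : ∫⁻ z, (JJ s μ z * JJ s μ z + JJ s ν z * JJ s ν z) ≤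
      ∫⁻ z, 2 * (JJ s μ z * JJ s ν z) := by
    rw [lintegral_add_left (by fun_prop), lintegral_const_mul' _ _ (by norm_num),
      ← II_eq hs0 hs1, ← II_eq hs0 hs1, ← II_eq hs0 hs1, mul_left_comm, ← mul_add]
    exact mul_le_mul_right h _
  have hJ : JJ s μ =ᵐ[volume] JJ s ν := by
    have h3 := ae_eq_of_ae_le_of_lintegral_le
      (Eventually.of_forall fun z => ennreal_two_mul_le (JJ s μ z) (JJ s ν z))
      ?_ (by fun_prop) h2
    · filter_upwards [h3, ae_lt_top (by fun_prop) fμ, ae_lt_top (by fun_prop) fν] with z e1 e2 e3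
      exact ennreal_eq_of_two_mul e2.ne e3.ne e1
    · refine ne_top_of_le_ne_top ?_ (lintegral_mono fun z => ennreal_two_mul_le _ _)
      rw [lintegral_add_left (by fun_prop)]
      exact ENNReal.add_ne_top.2 ⟨fμ, fν⟩
  have key : ∀ (ρ : Measure ℝ) [IsProbabilityMeasure ρ] (w : ℝ),
      ∫⁻ z, qq ((1 - s) / 2) (z - w) * JJ s ρ z = d0 s * ρ (Ioi w) := by
    intro ρ _ w
    have : ∀ z, qq ((1 - s) / 2) (z - w) * JJ s ρ z =
        ∫⁻ t, qq ((1 - s) / 2) (z - w) * qq ((1 + s) / 2) (t - z) ∂ρ := by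
      intro z
      rw [JJ, lintegral_const_mul _ (by fun_prop)]
    simp_rw [this]
    rw [lintegral_lintegral_swap
      (f := fun z t => qq ((1 - s) / 2) (z - w) * qq ((1 + s) / 2) (t - z)) (by
        apply Measurable.aemeasurable; unfold Function.uncurry; fun_prop)]
    simp_rw [abel hs0 hs1]
    rw [lintegral_const_mul _ (measurable_const.indicator measurableSet_Ioi),
      lintegral_indicator_const measurableSet_Ioi, one_mul]
  have hI : ∀ w, μ (Ioi w) = ν (Ioi w) := by
    intro w
    have e : d0 s * μ (Ioi w) = d0 s * ν (Ioi w) := by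
      rw [← key μ w, ← key ν w]
      refine lintegral_congr_ae ?_
      filter_upwards [hJ] with z hz
      rw [hz]
    refine (ENNReal.mul_right_inj ?_ ENNReal.ofReal_ne_top).1 e
    exact (ENNReal.ofReal_pos.2 (kap_pos hs0 hs1)).ne'
  refine Measure.ext_of_Iic μ ν fun w => ?_
  have e1 := measure_add_measure_compl (μ := μ) (measurableSet_Iic (a := w))
  have e2 := measure_add_measure_compl (μ := ν) (measurableSet_Iic (a := w))
  rw [compl_Iic, measure_univ] at e1 e2
  rw [hI w, ← e2] at e1
  exact (ENNReal.add_left_inj (measure_ne_top ν _)).1 e1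

/-! ### The one-dimensional minimization problem -/

/-- The one-dimensional interaction potential `|t|^{-s} + t²`. -/
def phi (s t : ℝ) : ℝ≥0∞ := kk s t + ENNReal.ofReal (t ^ 2)

@[fun_prop] lemma measurable_phi (s : ℝ) : Measurable (phi s) := by
  unfold phi; fun_prop

/-- Twice the one-dimensional interaction energy. -/
def FF (s : ℝ) (σ : Measure ℝ) : ℝ≥0∞ := ∫⁻ t, ∫⁻ t', phi s (t - t') ∂σ ∂σ

/-- The quadratic part of `FF`. -/
def QQ (σ : Measure ℝ) : ℝ≥0∞ := ∫⁻ t, ∫⁻ t', ENNReal.ofReal ((t - t') ^ 2) ∂σ ∂σ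

lemma FF_eq_add (s : ℝ) (σ : Measure ℝ) [SFinite σ] : FF s σ = II s σ σ + QQ σ := by
  unfold FF II QQ phi
  rw [← lintegral_add_left]
  · refine lintegral_congr fun t => ?_
    rw [lintegral_add_left (by fun_prop)]
  · exact Measurable.lintegral_prod_right' (f := fun p : ℝ × ℝ => kk s (p.1 - p.2)) (by fun_prop)

lemma FF_map (s : ℝ) (σ : Measure ℝ) [SFinite σ] (v : ℝ) :
    FF s (Measure.map (fun t => t + v) σ) = FF s σ := by
  unfold FF
  have : SFinite (Measure.map (fun t => t + v) σ) := inferInstance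
  rw [lintegral_map _ (by fun_prop)]
  · refine lintegral_congr fun t => ?_
    rw [lintegral_map (by fun_prop) (by fun_prop)]
    refine lintegral_congr fun t' => ?_
    rw [add_sub_add_right_eq_sub]
  · exact Measurable.lintegral_prod_right' (f := fun p : ℝ × ℝ => phi s (p.1 - p.2)) (by fun_prop)

lemma integrable_sq_of_lintegral {σ : Measure ℝ} (h : ∫⁻ t, ENNReal.ofReal (t ^ 2) ∂σ ≠ ⊤) :
    Integrable (fun t : ℝ => t ^ 2) σ :=
  (lintegral_ofReal_ne_top_iff_integrable (by fun_prop)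
    (Eventually.of_forall fun t => sq_nonneg t)).1 h

lemma integrable_id_of_sq {σ : Measure ℝ} [IsProbabilityMeasure σ]
    (h : Integrable (fun t : ℝ => t ^ 2) σ) : Integrable (fun t : ℝ => t) σ := by
  refine (h.add (integrable_const (1:ℝ))).mono' (by fun_prop) (Eventually.of_forall fun t => ?_)
  show |t| ≤ t ^ 2 + 1
  rw [← sq_abs]; nlinarith [sq_nonneg (|t| - 1)]

/-- For a centred measure the quadratic interaction is twice the second moment. -/
lemma QQ_eq {σ : Measure ℝ} [IsProbabilityMeasure σ] (h : ∫⁻ t, ENNReal.ofReal (t ^ 2) ∂σ ≠ ⊤)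
    (h0 : ∫ t, t ∂σ = 0) : QQ σ = 2 * ∫⁻ t, ENNReal.ofReal (t ^ 2) ∂σ := by
  have i2 := integrable_sq_of_lintegral h
  have i1 := integrable_id_of_sq i2
  have hi : ∀ t, ∫⁻ t', ENNReal.ofReal ((t - t') ^ 2) ∂σ =
      ENNReal.ofReal (t ^ 2) + ∫⁻ t', ENNReal.ofReal (t' ^ 2) ∂σ := by
    intro t
    have e : ∀ t' : ℝ, (t - t') ^ 2 = t ^ 2 + (-2 * t) * t' + t' ^ 2 := fun t' => by ring
    have j : Integrable (fun t' : ℝ => t ^ 2 + (-2 * t) * t') σ :=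
      (integrable_const _).add (i1.const_mul _)
    rw [← ofReal_integral_eq_lintegral_ofReal (by simp_rw [e]; exact j.add i2)
      (Eventually.of_forall fun t' => sq_nonneg _),
      ← ofReal_integral_eq_lintegral_ofReal i2 (Eventually.of_forall fun t' => sq_nonneg _),
      ← ENNReal.ofReal_add (sq_nonneg _) (integral_nonneg fun t' => sq_nonneg _)]
    simp_rw [e]
    rw [integral_add j i2, integral_add (integrable_const _) (i1.const_mul _),
      integral_const_mul, h0]
    simp
  unfold QQ
  simp_rw [hi]
  rw [lintegral_add_left (by fun_prop), lintegral_const, measure_univ, mul_one, two_mul]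

lemma sq_moment_of_QQ {σ : Measure ℝ} [IsProbabilityMeasure σ] (h : QQ σ ≠ ⊤) :
    ∫⁻ t, ENNReal.ofReal (t ^ 2) ∂σ ≠ ⊤ := by
  have hm : Measurable fun t => ∫⁻ t', ENNReal.ofReal ((t - t') ^ 2) ∂σ :=
    Measurable.lintegral_prod_right' (f := fun p : ℝ × ℝ => ENNReal.ofReal ((p.1 - p.2) ^ 2))
      (by fun_prop)
  obtain ⟨a, ha⟩ := (ae_lt_top hm h).exists
  have h1 : ∫⁻ t, ENNReal.ofReal (t ^ 2) ∂σ ≤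
      ∫⁻ t, (ENNReal.ofReal (2 * a ^ 2) + ENNReal.ofReal 2 * ENNReal.ofReal ((a - t) ^ 2)) ∂σ := by
    refine lintegral_mono fun t => ?_
    rw [← ENNReal.ofReal_mul two_pos.le, ← ENNReal.ofReal_add (by positivity) (by positivity)]
    apply ENNReal.ofReal_le_ofReal
    nlinarith [sq_nonneg (t - 2 * a)]
  refine ne_top_of_le_ne_top ?_ h1
  rw [lintegral_add_left (by fun_prop), lintegral_const_mul' _ _ ENNReal.ofReal_ne_top,
    lintegral_const, measure_univ]
  exact ENNReal.add_ne_top.2 ⟨ENNReal.mul_ne_top ENNReal.ofReal_ne_top (by simp),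
    ENNReal.mul_ne_top ENNReal.ofReal_ne_top ha.ne⟩

/-- Euler–Lagrange identity for `ρ₁`, integrated against `ρ₁`. -/
lemma II_rho1 {s : ℝ} (hs0 : 0 < s) (hs1 : s < 1) :
    II s (rho1meas s) (rho1meas s) + ∫⁻ t, ENNReal.ofReal (t ^ 2) ∂(rho1meas s) =
      ENNReal.ofReal (R1 s ^ 2 / s) := by
  have := isProb_rho1meas hs0 hs1
  rw [II, ← lintegral_add_right _ (by fun_prop)]
  rw [← mul_one (ENNReal.ofReal (R1 s ^ 2 / s)), ← measure_univ (μ := rho1meas s), ← lintegral_const]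
  refine lintegral_congr_ae ?_
  filter_upwards [ae_rho1meas hs0 hs1] with t ht
  exact pot_inside hs0 hs1 ht.le

/-- Euler–Lagrange inequality for `ρ₁`, integrated against an arbitrary measure. -/
lemma II_rho1_le {s : ℝ} (hs0 : 0 < s) (hs1 : s < 1) (σ : Measure ℝ) [IsProbabilityMeasure σ] :
    ENNReal.ofReal (R1 s ^ 2 / s) ≤
      II s σ (rho1meas s) + ∫⁻ t, ENNReal.ofReal (t ^ 2) ∂σ := by
  have := isProb_rho1meas hs0 hs1
  rw [II, ← lintegral_add_right _ (by fun_prop)]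
  rw [← mul_one (ENNReal.ofReal (R1 s ^ 2 / s)), ← measure_univ (μ := σ), ← lintegral_const]
  exact lintegral_mono fun t => pot_outside hs0 hs1 t

lemma sq_moment_rho1 {s : ℝ} (hs0 : 0 < s) (hs1 : s < 1) :
    ∫⁻ t, ENNReal.ofReal (t ^ 2) ∂(rho1meas s) ≠ ⊤ := by
  refine ne_top_of_le_ne_top ENNReal.ofReal_ne_top ((II_rho1 hs0 hs1).le.trans' le_add_self)

lemma II_rho1_ne_top {s : ℝ} (hs0 : 0 < s) (hs1 : s < 1) :
    II s (rho1meas s) (rho1meas s) ≠ ⊤ := by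
  refine ne_top_of_le_ne_top ENNReal.ofReal_ne_top ((II_rho1 hs0 hs1).le.trans' le_self_add)

lemma FF_rho1 {s : ℝ} (hs0 : 0 < s) (hs1 : s < 1) :
    FF s (rho1meas s) = II s (rho1meas s) (rho1meas s) +
      2 * ∫⁻ t, ENNReal.ofReal (t ^ 2) ∂(rho1meas s) := by
  have := isProb_rho1meas hs0 hs1
  rw [FF_eq_add, QQ_eq (sq_moment_rho1 hs0 hs1) (mean_rho1meas hs0 hs1)]

lemma FF_rho1_ne_top {s : ℝ} (hs0 : 0 < s) (hs1 : s < 1) : FF s (rho1meas s) ≠ ⊤ := by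
  rw [FF_rho1 hs0 hs1]
  exact ENNReal.add_ne_top.2 ⟨II_rho1_ne_top hs0 hs1,
    ENNReal.mul_ne_top (by norm_num) (sq_moment_rho1 hs0 hs1)⟩

lemma FF_add_II {s : ℝ} (hs0 : 0 < s) (hs1 : s < 1) :
    FF s (rho1meas s) + II s (rho1meas s) (rho1meas s) = 2 * ENNReal.ofReal (R1 s ^ 2 / s) := by
  rw [FF_rho1 hs0 hs1, ← II_rho1 hs0 hs1]; ring

/-- Minimality of `ρ₁` among centred measures. Centring turns the quadratic part of the energy into the
external potential `t²`, to which the Euler–Lagrange conditions of `ρ₁` apply. -/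
lemma FF_centered {s : ℝ} (hs0 : 0 < s) (hs1 : s < 1) {σ : Measure ℝ} [IsProbabilityMeasure σ]
    (h : ∫⁻ t, ENNReal.ofReal (t ^ 2) ∂σ ≠ ⊤) (hI : II s σ σ ≠ ⊤) (h0 : ∫ t, t ∂σ = 0) :
    FF s (rho1meas s) ≤ FF s σ ∧ (FF s σ ≤ FF s (rho1meas s) → σ = rho1meas s) := by
  have := isProb_rho1meas hs0 hs1
  have hF : FF s σ = II s σ σ + 2 * ∫⁻ t, ENNReal.ofReal (t ^ 2) ∂σ := by
    rw [FF_eq_add, QQ_eq h h0]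
  have h1 := II_cross_le hs0 hs1 σ (rho1meas s)
  have h2 := mul_le_mul_right (II_rho1_le hs0 hs1 σ) 2
  have h3 := FF_add_II hs0 hs1
  have hT := II_rho1_ne_top hs0 hs1
  constructor
  · rw [← ENNReal.add_le_add_iff_right hT, h3]
    refine h2.trans ?_
    rw [mul_add, hF, add_right_comm]
    gcongr
  · intro hle
    refine eq_of_II hs0 hs1 σ _ hI hT ?_
    rw [← ENNReal.add_le_add_iff_right hT, h3, hF, add_right_comm] at hle
    have h4 := hle.trans h2
    rw [mul_add] at h4
    exact (ENNReal.add_le_add_iff_right (ENNReal.mul_ne_top (by norm_num) h)).1 h4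

/-- `ρ₁` minimizes the one-dimensional energy, uniquely up to translation. -/
lemma FF_min {s : ℝ} (hs0 : 0 < s) (hs1 : s < 1) (σ : Measure ℝ) [IsProbabilityMeasure σ] :
    FF s (rho1meas s) ≤ FF s σ ∧ (FF s σ ≤ FF s (rho1meas s) →
      ∃ v : ℝ, σ = Measure.map (fun t => t + v) (rho1meas s)) := by
  by_cases hT : FF s σ = ⊤
  · refine ⟨by rw [hT]; exact le_top, fun h => ?_⟩
    rw [hT, top_le_iff] at h
    exact absurd h (FF_rho1_ne_top hs0 hs1)
  have hQ : QQ σ ≠ ⊤ := by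
    rw [FF_eq_add] at hT; exact (ENNReal.add_ne_top.1 hT).2
  have i1 := integrable_id_of_sq (integrable_sq_of_lintegral (sq_moment_of_QQ hQ))
  set m := ∫ t, t ∂σ with hm
  set σ' := Measure.map (fun t => t + -m) σ with hσ'
  have : IsProbabilityMeasure σ' := Measure.isProbabilityMeasure_map (by fun_prop)
  have hF : FF s σ' = FF s σ := FF_map s σ (-m)
  rw [← hF] at hT
  have hT' := hT
  rw [FF_eq_add, ← ne_eq, ENNReal.add_ne_top] at hT'
  have h0 : ∫ t, t ∂σ' = 0 := by
    rw [hσ', integral_map (by fun_prop) (by fun_prop), integral_add i1 (integrable_const _)]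
    simp [← hm]
  have h := FF_centered hs0 hs1 (sq_moment_of_QQ hT'.2) hT'.1 h0
  rw [hF] at h
  refine ⟨h.1, fun hle => ⟨m, ?_⟩⟩
  rw [← h.2 hle, hσ', Measure.map_map (by fun_prop) (by fun_prop)]
  have : ((fun t : ℝ => t + m) ∘ fun t => t + -m) = id := by
    funext t; simp
  rw [this, Measure.map_id]

/-! ### Averaging the one-dimensional kernel over projections -/

lemma kk_mul (s : ℝ) {a : ℝ} (ha : a ≠ 0) (t : ℝ) :
    kk s (a * t) = ENNReal.ofReal (|a| ^ (-s)) * kk s t := by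
  by_cases ht : t = 0
  · have : 0 < |a| := abs_pos.2 ha
    rw [ht, mul_zero, kk, if_pos rfl, ENNReal.mul_top]
    exact (ENNReal.ofReal_pos.2 (by positivity)).ne'
  · rw [kk, if_neg (mul_ne_zero ha ht), kk, if_neg ht, abs_mul,
      Real.mul_rpow (abs_nonneg _) (abs_nonneg _), ENNReal.ofReal_mul (by positivity)]

lemma lintegral_kk_le {s : ℝ} (hs1 : s < 1) (hs0 : 0 < s) :
    ∫⁻ w in Ioo (-2:ℝ) 2, kk s w ≤ ENNReal.ofReal (4 / (1 - s)) := by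
  have h1 : ∫⁻ w in Ioo (0:ℝ) 2, ENNReal.ofReal (w ^ (-s)) ≤ ENNReal.ofReal (2 / (1 - s)) := by
    have hi : IntegrableOn (fun w : ℝ => w ^ (-s)) (Ioc 0 2) :=
      (intervalIntegrable_iff_integrableOn_Ioc_of_le zero_le_two).1
        (intervalIntegral.intervalIntegrable_rpow' (by linarith))
    rw [setLIntegral_congr Ioo_ae_eq_Ioc, ← ofReal_integral_eq_lintegral_ofReal hi,
      ← intervalIntegral.integral_of_le zero_le_two, integral_rpow (Or.inl (by linarith))]
    · apply ENNReal.ofReal_le_ofReal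
      have h3 : 0 < 1 - s := by linarith
      rw [Real.zero_rpow (by linarith), sub_zero, show -s + 1 = 1 - s by ring]
      gcongr
      calc (2:ℝ) ^ (1 - s) ≤ 2 ^ (1:ℝ) := by gcongr <;> linarith
        _ = 2 := Real.rpow_one 2
    · refine (ae_restrict_iff' measurableSet_Ioc).2 (Eventually.of_forall fun w hw => ?_)
      exact Real.rpow_nonneg hw.1.le _
  have h2 : ∀ e : ℝ, |e| = 1 → ∫⁻ w in Ioo (0:ℝ) 2, kk s (e * w) =
      ∫⁻ w in Ioo (0:ℝ) 2, ENNReal.ofReal (w ^ (-s)) := by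
    intro e he
    refine setLIntegral_congr_fun measurableSet_Ioo fun w hw => ?_
    show kk s (e * w) = _
    rw [kk_mul s (by rintro rfl; simp at he), he, Real.one_rpow, ENNReal.ofReal_one, one_mul, kk,
      if_neg hw.1.ne', abs_of_pos hw.1]
  rw [lintegral_Ioo_split two_pos]
  have e1 := h2 1 (by simp)
  have e2 := h2 (-1) (by simp)
  simp only [one_mul, neg_mul] at e1 e2
  rw [e1, e2]
  refine (add_le_add h1 h1).trans ?_
  have h3 : 0 < 1 - s := by linarith
  rw [← ENNReal.ofReal_add (by positivity) (by positivity)]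
  apply ENNReal.ofReal_le_ofReal; apply le_of_eq; field_simp; ring

lemma lintegral_poly {A B C : ℝ} (h : ∀ u ∈ Icc (-(1/2):ℝ) (1/2), 0 ≤ A + B * u + C * u ^ 2) :
    ∫⁻ u in Icc (-(1/2):ℝ) (1/2), ENNReal.ofReal (A + B * u + C * u ^ 2) =
      ENNReal.ofReal (A + C / 12) := by
  rw [← ofReal_integral_eq_lintegral_ofReal, integral_Icc_eq_integral_Ioc,
    ← intervalIntegral.integral_of_le (by norm_num)]
  · congr 1
    rw [intervalIntegral.integral_add, intervalIntegral.integral_add,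
      intervalIntegral.integral_const_mul, intervalIntegral.integral_const_mul, integral_id,
      integral_pow, intervalIntegral.integral_const]
    · norm_num; ring
    all_goals exact Continuous.intervalIntegrable (by fun_prop) _ _
  · exact Continuous.integrableOn_Icc (by fun_prop)
  · exact (ae_restrict_iff' measurableSet_Icc).2 (Eventually.of_forall h)

/-- Second-order upper bound; the linear term vanishes after averaging over a symmetric interval. -/
lemma rpow_neg_le {s v : ℝ} (hs0 : 0 < s) (hs1 : s < 1) (hv : |v| ≤ 1 / 2) :
    (1 + v) ^ (-s) ≤ 1 - s * v + 2 * s * v ^ 2 := by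
  obtain ⟨h1, h2⟩ := abs_le.1 hv
  have hp : 0 < 1 + v := by linarith
  have hb := rpow_one_add_le_one_add_mul_self (s := (1 + v)⁻¹ - 1) (p := s)
    (by have : 0 < (1 + v)⁻¹ := by positivity
        linarith) hs0.le hs1.le
  rw [show 1 + ((1 + v)⁻¹ - 1) = (1 + v)⁻¹ by ring, Real.inv_rpow hp.le, ← Real.rpow_neg hp.le] at hb
  have h3 : (1 + v)⁻¹ - 1 ≤ -v + 2 * v ^ 2 := by
    rw [sub_le_iff_le_add, inv_le_iff_one_le_mul₀ hp]
    nlinarith [sq_nonneg v, mul_nonneg (sq_nonneg v) (show 0 ≤ v + 1 / 2 by linarith)]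
  nlinarith

lemma rpow_split {s N b : ℝ} (hN : 0 < N) (hb : b ≠ 0) :
    |b| ^ (-s) = N ^ (-(s / 2)) * (N / b ^ 2) ^ (s / 2) := by
  have hb' : 0 < |b| := abs_pos.2 hb
  rw [← sq_abs b, Real.div_rpow hN.le (by positivity), mul_div_assoc', ← Real.rpow_add hN,
    neg_add_cancel, Real.rpow_zero, ← Real.rpow_two, ← Real.rpow_mul hb'.le,
    show 2 * (s / 2) = s by ring, Real.rpow_neg hb'.le, one_div]

/-- Averaging the one-dimensional kernel over the linear forms `x₂ + u x₁`, `|u| ≤ 1/2`, costs at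
most the angular penalty `1 + C cos² θ` with `C = 16/(1-s)`. -/
lemma kernel_le {s a b : ℝ} (hs0 : 0 < s) (hs1 : s < 1) (h : 0 < a ^ 2 + b ^ 2) :
    ∫⁻ u in Icc (-(1/2):ℝ) (1/2), kk s (b + u * a) ≤
      ENNReal.ofReal ((a ^ 2 + b ^ 2) ^ (-(s / 2)) * (1 + 16 / (1 - s) * (a ^ 2 / (a ^ 2 + b ^ 2)))) := by
  have h3 : 0 < 1 - s := by linarith
  have hC : 16 ≤ 16 / (1 - s) := by
    rw [le_div_iff₀ h3]; nlinarith
  set N := a ^ 2 + b ^ 2 with hN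
  have hNp : 0 < N ^ (-(s / 2)) := by positivity
  -- directions close to the vertical are expanded to second order; otherwise the angular penalty
  -- is large and the integrability of the kernel suffices
  rcases le_or_gt |a| |b| with hab | hab
  · have hb : b ≠ 0 := by
      rintro rfl
      have : a = 0 := by simpa using hab
      rw [hN, this] at h; simp at h
    have hb' : 0 < |b| := abs_pos.2 hb
    set r := a / b with hr
    have hr1 : |r| ≤ 1 := by rw [hr, abs_div, div_le_one hb']; exact hab
    have hr2 : r ^ 2 ≤ 1 := by rw [← sq_abs]; nlinarith [abs_nonneg r]
    have hv : ∀ u ∈ Icc (-(1/2):ℝ) (1/2), |u * r| ≤ 1 / 2 := by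
      intro u hu
      rw [abs_mul]
      have : |u| ≤ 1 / 2 := abs_le.2 hu
      nlinarith [abs_nonneg u, abs_nonneg r]
    have h1 : ∫⁻ u in Icc (-(1/2):ℝ) (1/2), kk s (b + u * a) ≤
        ∫⁻ u in Icc (-(1/2):ℝ) (1/2), ENNReal.ofReal (|b| ^ (-s)) *
          ENNReal.ofReal (1 + (-(s * r)) * u + (2 * s * r ^ 2) * u ^ 2) := by
      refine setLIntegral_mono' measurableSet_Icc fun u hu => ?_
      have hp : 0 < 1 + u * r := by linarith [(abs_le.1 (hv u hu)).1]
      rw [show b + u * a = b * (1 + u * r) by rw [hr]; field_simp, kk_mul s hb, kk, if_neg hp.ne',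
        abs_of_pos hp]
      gcongr
      refine (rpow_neg_le hs0 hs1 (hv u hu)).trans (le_of_eq (by ring))
    refine h1.trans ?_
    rw [lintegral_const_mul' _ _ ENNReal.ofReal_ne_top, lintegral_poly, ← ENNReal.ofReal_mul (by positivity)]
    · apply ENNReal.ofReal_le_ofReal
      have hNb : N / b ^ 2 = 1 + r ^ 2 := by rw [hN, hr]; field_simp; ring
      have hNa : a ^ 2 / N = r ^ 2 / (1 + r ^ 2) := by rw [← hNb, hr]; field_simp
      rw [rpow_split h hb, mul_assoc, hNb, hNa]
      gcongr
      have hb2 := rpow_one_add_le_one_add_mul_self (s := r ^ 2) (p := s / 2)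
        (by nlinarith [sq_nonneg r]) (by linarith) (by linarith)
      have h4 : r ^ 2 / 2 ≤ r ^ 2 / (1 + r ^ 2) := by gcongr; linarith
      have h5 : 16 * (r ^ 2 / 2) ≤ 16 / (1 - s) * (r ^ 2 / (1 + r ^ 2)) := by gcongr
      have h6 : (1 + r ^ 2) ^ (s / 2) * (1 + 2 * s * r ^ 2 / 12) ≤
          (1 + s / 2 * r ^ 2) * (1 + 2 * s * r ^ 2 / 12) := by gcongr
      refine h6.trans (le_trans ?_ (add_le_add_right h5 1))
      have h7 : s * r ^ 2 ≤ r ^ 2 := by nlinarith [sq_nonneg r]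
      have h8 : 0 ≤ s * r ^ 2 := by positivity
      nlinarith [mul_nonneg h8 (sub_nonneg.2 h7), sq_nonneg r]
    · intro u hu
      have := rpow_neg_le hs0 hs1 (hv u hu)
      have hp : 0 < 1 + u * r := by linarith [(abs_le.1 (hv u hu)).1]
      have h9 : 0 < (1 + u * r) ^ (-s) := by positivity
      nlinarith
  · have ha' : 0 < |a| := (abs_nonneg b).trans_lt hab
    have ha : a ≠ 0 := abs_pos.1 ha'
    have h1 : ∫⁻ u in Icc (-(1/2):ℝ) (1/2), kk s (b + u * a) ≤
        ENNReal.ofReal (|a| ^ (-s)) * ENNReal.ofReal (4 / (1 - s)) := by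
      refine le_trans ?_ (mul_le_mul_right (lintegral_kk_le hs1 hs0) _)
      rw [← lintegral_const_mul' _ _ ENNReal.ofReal_ne_top, ← lintegral_indicator measurableSet_Icc,
        ← lintegral_indicator measurableSet_Ioo, ← lintegral_add_right_eq_self ((Ioo (-2:ℝ) 2).indicator _) (b / a)]
      refine lintegral_mono fun u => ?_
      by_cases hu : u ∈ Icc (-(1/2):ℝ) (1/2)
      · have hba : |b / a| ≤ 1 := by rw [abs_div, div_le_one ha']; exact hab.le
        rw [indicator_of_mem hu, indicator_of_mem, ← kk_mul s ha]
        · apply le_of_eq; congr 1; field_simp; ring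
        · have h' := abs_le.1 hba
          exact ⟨by linarith [hu.1], by linarith [hu.2]⟩
      · rw [indicator_of_notMem hu]; exact zero_le
    refine h1.trans ?_
    rw [← ENNReal.ofReal_mul (by positivity)]
    apply ENNReal.ofReal_le_ofReal
    have hsq : b ^ 2 ≤ a ^ 2 := by rw [← sq_abs b, ← sq_abs a]; nlinarith [abs_nonneg b]
    have ha2 : 0 < a ^ 2 := by positivity
    have hNa : N / a ^ 2 ≤ 2 := by rw [div_le_iff₀ ha2]; linarith
    have hc : 1 / 2 ≤ a ^ 2 / N := by rw [div_le_div_iff₀ two_pos h]; linarith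
    rw [rpow_split h ha, mul_assoc]
    gcongr
    have h4 : (N / a ^ 2) ^ (s / 2) ≤ 2 := by
      calc (N / a ^ 2) ^ (s / 2) ≤ 2 ^ (s / 2) := by gcongr
        _ ≤ 2 ^ (1:ℝ) := by gcongr <;> linarith
        _ = 2 := Real.rpow_one 2
    calc (N / a ^ 2) ^ (s / 2) * (4 / (1 - s)) ≤ 2 * (4 / (1 - s)) := by gcongr
      _ = 16 / (1 - s) * (1 / 2) := by ring
      _ ≤ 16 / (1 - s) * (a ^ 2 / N) := by gcongr
      _ ≤ _ := by linarith

/-! ### Strongly coercive anisotropies -/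

lemma nrm_sq (x : ℝ × ℝ) : nrm x ^ 2 = x.1 ^ 2 + x.2 ^ 2 := Real.sq_sqrt (by positivity)

lemma nrm_rpow (s : ℝ) (x : ℝ × ℝ) : nrm x ^ (-s) = (x.1 ^ 2 + x.2 ^ 2) ^ (-(s / 2)) := by
  rw [nrm, Real.sqrt_eq_rpow, ← Real.rpow_mul (by positivity)]
  congr 1; ring

lemma sq_add_sq_pos {x : ℝ × ℝ} (hx : x ≠ 0) : 0 < x.1 ^ 2 + x.2 ^ 2 := by
  by_contra! h
  apply hx
  ext
  · show x.1 = 0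
    nlinarith [sq_nonneg x.1, sq_nonneg x.2]
  · show x.2 = 0
    nlinarith [sq_nonneg x.1, sq_nonneg x.2]

@[fun_prop] lemma measurable_ang : Measurable ang := by
  unfold ang
  have h : Measurable fun x : ℝ × ℝ => Complex.arg ⟨x.1, x.2⟩ :=
    Complex.measurable_arg.comp (Complex.measurableEquivRealProd.symm.measurable)
  exact Measurable.ite (measurableSet_eq_fun h measurable_const) measurable_const h

@[fun_prop] lemma measurable_nrm : Measurable nrm := by
  unfold nrm; fun_prop

lemma measurable_Wkernel (s : ℝ) {Ω : ℝ → ℝ} (h : Measurable Ω) : Measurable (Wkernel s Ω) := by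
  unfold Wkernel
  exact Measurable.ite (measurableSet_singleton 0) measurable_const (by fun_prop)

lemma ang_mem (x : ℝ × ℝ) : -π ≤ ang x ∧ ang x < π := by
  unfold ang
  have h1 := Complex.neg_pi_lt_arg ⟨x.1, x.2⟩
  have h2 := Complex.arg_le_pi ⟨x.1, x.2⟩
  split_ifs with h
  · exact ⟨le_rfl, by linarith [Real.pi_pos]⟩
  · exact ⟨h1.le, lt_of_le_of_ne h2 h⟩

lemma cos_ang_sq {x : ℝ × ℝ} (hx : x ≠ 0) :
    Real.cos (ang x) ^ 2 = x.1 ^ 2 / (x.1 ^ 2 + x.2 ^ 2) := by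
  have h0 : (⟨x.1, x.2⟩ : ℂ) ≠ 0 := by
    intro h
    apply hx
    ext
    · exact congrArg Complex.re h
    · exact congrArg Complex.im h
  have h1 : Real.cos (ang x) = Real.cos (Complex.arg ⟨x.1, x.2⟩) := by
    unfold ang
    split_ifs with h
    · rw [h, Real.cos_neg]
    · rfl
  rw [h1, Complex.cos_arg h0, div_pow, Complex.sq_norm, Complex.normSq_mk]
  ring_nf

lemma cos_sq_le_angle (θ : ℝ) : Real.cos θ ^ 2 ≤ |θ - π / 2| ^ 2 := by
  have h : |Real.cos θ| ≤ |θ - π / 2| := by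
    rw [← Real.sin_pi_div_two_sub, abs_sub_comm]
    exact Real.abs_sin_le_abs
  rw [← sq_abs (Real.cos θ)]
  gcongr

/-- A coercivity bound on `[0, π]` propagates to all directions by `π`-periodicity. -/
lemma coercive_ang {Ω : ℝ → ℝ} {A C : ℝ} (hC : 0 ≤ C) (hper : ∀ θ, Ω (θ + π) = Ω θ)
    (h : ∀ θ ∈ Icc (0:ℝ) π, A + C * |θ - π / 2| ^ 2 ≤ Ω θ) {x : ℝ × ℝ} (hx : x ≠ 0) :
    A + C * (x.1 ^ 2 / (x.1 ^ 2 + x.2 ^ 2)) ≤ Ω (ang x) := by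
  rw [← cos_ang_sq hx]
  have key : ∀ θ ∈ Icc (0:ℝ) π, A + C * Real.cos θ ^ 2 ≤ Ω θ := fun θ hθ =>
    le_trans (add_le_add_right (mul_le_mul_of_nonneg_left (cos_sq_le_angle θ) hC) A) (h θ hθ)
  obtain ⟨h1, h2⟩ := ang_mem x
  rcases le_or_gt 0 (ang x) with h0 | h0
  · exact key _ ⟨h0, h2.le⟩
  · have := key (ang x + π) ⟨by linarith, by linarith⟩
    rwa [hper, Real.cos_add_pi, neg_sq] at this

lemma Omega_ang_vert {Ω : ℝ → ℝ} (hper : ∀ θ, Ω (θ + π) = Ω θ) {t : ℝ} (ht : t ≠ 0) :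
    Ω (ang (0, t)) = Ω (π / 2) := by
  have hp := Real.pi_pos
  have hI : (⟨0, t⟩ : ℂ) = t * Complex.I := by
    apply Complex.ext <;> simp
  rcases lt_or_gt_of_ne ht with h | h
  · have : Complex.arg ⟨0, t⟩ = -(π / 2) := by
      rw [hI, show (t : ℂ) * Complex.I = ((-t : ℝ) : ℂ) * (-Complex.I) by push_cast; ring,
        Complex.arg_real_mul _ (by linarith), Complex.arg_neg_I]
    unfold ang
    rw [this, if_neg (by linarith), ← hper]
    congr 1; ring
  · have : Complex.arg ⟨0, t⟩ = π / 2 := by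
      rw [hI, Complex.arg_real_mul _ h, Complex.arg_I]
    unfold ang
    rw [this, if_neg (by linarith)]

lemma Wkernel_vert (s : ℝ) {Ω : ℝ → ℝ} (hper : ∀ θ, Ω (θ + π) = Ω θ) (h1 : Ω (π / 2) = 1) (t : ℝ) :
    Wkernel s Ω (0, t) = phi s t := by
  by_cases ht : t = 0
  · subst ht
    simp [Wkernel, phi, kk]
  · have hx : ((0:ℝ), t) ≠ 0 := by
      intro h; exact ht (congrArg Prod.snd h)
    have hn : nrm (0, t) = |t| := by simp [nrm, Real.sqrt_sq_eq_abs]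
    rw [Wkernel, if_neg hx, Omega_ang_vert hper ht, h1, mul_one, hn, sq_abs, phi, kk, if_neg ht,
      ENNReal.ofReal_add (by positivity) (by positivity)]

lemma measurableEmbedding_vert (c : ℝ) : MeasurableEmbedding fun t : ℝ => (c, t) :=
  measurableEmbedding_prodMk_left c

lemma energy_vert (s : ℝ) {Ω : ℝ → ℝ} (hper : ∀ θ, Ω (θ + π) = Ω θ) (h1 : Ω (π / 2) = 1) (c : ℝ)
    (σ : Measure ℝ) : energy s Ω (Measure.map (fun t => (c, t)) σ) = 1 / 2 * FF s σ := by
  rw [energy, (measurableEmbedding_vert c).lintegral_map, FF]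
  congr 1
  refine lintegral_congr fun t => ?_
  rw [(measurableEmbedding_vert c).lintegral_map]
  refine lintegral_congr fun t' => ?_
  rw [Prod.mk_sub_mk, sub_self, Wkernel_vert s hper h1]

lemma isProb_rho1D {s : ℝ} (hs0 : 0 < s) (hs1 : s < 1) : IsProbabilityMeasure (rho1D s) := by
  have := isProb_rho1meas hs0 hs1
  exact Measure.isProbabilityMeasure_map (by fun_prop)

/-- If almost all pairs of points have the same abscissa, the measure sits on a vertical line. -/
lemma exists_vert {μ : Measure (ℝ × ℝ)} [IsProbabilityMeasure μ]
    (h : ∀ᵐ x ∂μ, ∀ᵐ y ∂μ, x.1 = y.1) : ∃ c : ℝ, μ = Measure.map (fun t => (c, t)) (μ.map Prod.snd) := by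
  obtain ⟨x, hx⟩ := h.exists
  refine ⟨x.1, ?_⟩
  rw [Measure.map_map (by fun_prop) (by fun_prop)]
  conv_lhs => rw [← Measure.map_id (μ := μ)]
  refine Measure.map_congr ?_
  filter_upwards [hx] with y hy
  exact Prod.ext hy.symm rfl

/-- A measure concentrated on a vertical line with minimal energy is a translate of `ρ_{1D}`. -/
lemma vert_unique {s : ℝ} (hs0 : 0 < s) (hs1 : s < 1) {Ω : ℝ → ℝ} (hper : ∀ θ, Ω (θ + π) = Ω θ)
    (h1 : Ω (π / 2) = 1) {μ : Measure (ℝ × ℝ)} [IsProbabilityMeasure μ]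
    (h : ∀ᵐ x ∂μ, ∀ᵐ y ∂μ, x.1 = y.1) (hE : energy s Ω μ ≤ energy s Ω (rho1D s)) :
    ∃ v : ℝ × ℝ, μ = Measure.map (fun x => x + v) (rho1D s) := by
  obtain ⟨c, hc⟩ := exists_vert h
  have : IsProbabilityMeasure (μ.map Prod.snd) := Measure.isProbabilityMeasure_map (by fun_prop)
  rw [hc, rho1D, energy_vert s hper h1, energy_vert s hper h1,
    ENNReal.mul_le_mul_iff_right (by simp) (by simp)] at hE
  obtain ⟨v, hv⟩ := (FF_min hs0 hs1 _).2 hE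
  refine ⟨(c, v), ?_⟩
  rw [hc, hv, rho1D, Measure.map_map (by fun_prop) (by fun_prop),
    Measure.map_map (by fun_prop) (by fun_prop)]
  congr 1
  funext t
  simp

/-- The comparison kernel bounding the anisotropic potential from below. -/
def WL (s : ℝ) (x : ℝ × ℝ) : ℝ≥0∞ :=
  (∫⁻ u in Icc (-(1/2):ℝ) (1/2), phi s (x.2 + u * x.1)) + ENNReal.ofReal (11 / 12 * x.1 ^ 2)

/-- The average of `(x₂ + u x₁)²` over `|u| ≤ 1/2` is `x₂² + x₁² / 12`, which leaves `(11/12) x₁²` of the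
quadratic confinement unused. -/
lemma WL_le {s : ℝ} (hs0 : 0 < s) (hs1 : s < 1) {Ω : ℝ → ℝ} (hper : ∀ θ, Ω (θ + π) = Ω θ)
    (h : ∀ θ ∈ Icc (0:ℝ) π, 1 + 16 / (1 - s) * |θ - π / 2| ^ 2 ≤ Ω θ) (x : ℝ × ℝ) :
    WL s x ≤ Wkernel s Ω x := by
  by_cases hx : x = 0
  · rw [Wkernel, if_pos hx]; exact le_top
  have h3 : 0 < 1 - s := by linarith
  have hN := sq_add_sq_pos hx
  rw [Wkernel, if_neg hx, WL, nrm_rpow, nrm_sq]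
  have h1 : ∫⁻ u in Icc (-(1/2):ℝ) (1/2), phi s (x.2 + u * x.1) =
      (∫⁻ u in Icc (-(1/2):ℝ) (1/2), kk s (x.2 + u * x.1)) +
        ENNReal.ofReal (x.2 ^ 2 + x.1 ^ 2 / 12) := by
    unfold phi
    rw [lintegral_add_left (by fun_prop), ← lintegral_poly (B := 2 * x.1 * x.2)]
    · congr 1
      refine lintegral_congr fun u => ?_
      congr 1; ring
    · intro u _
      nlinarith [sq_nonneg (x.2 + u * x.1)]
  have h2 := kernel_le hs0 hs1 hN
  have hc := coercive_ang (by positivity) hper h hx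
  rw [h1, add_assoc, ← ENNReal.ofReal_add (by positivity) (by positivity)]
  refine (add_le_add_left h2 _).trans ?_
  rw [← ENNReal.ofReal_add (by positivity) (by positivity)]
  apply ENNReal.ofReal_le_ofReal
  refine add_le_add ?_ (le_of_eq (by ring))
  gcongr

/-- Lower bound for the energy with a penalty on the horizontal spread: for each `u` the averaged
kernel is the one-dimensional interaction of the image of `μ` under `x ↦ x₂ + u x₁`. -/
lemma energy_ge {s : ℝ} (hs0 : 0 < s) (hs1 : s < 1) {Ω : ℝ → ℝ} (hper : ∀ θ, Ω (θ + π) = Ω θ)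
    (h : ∀ θ ∈ Icc (0:ℝ) π, 1 + 16 / (1 - s) * |θ - π / 2| ^ 2 ≤ Ω θ) (μ : Measure (ℝ × ℝ))
    [IsProbabilityMeasure μ] :
    1 / 2 * (FF s (rho1meas s) + ∫⁻ x, ∫⁻ y, ENNReal.ofReal (11 / 12 * (x.1 - y.1) ^ 2) ∂μ ∂μ) ≤
      energy s Ω μ := by
  unfold energy
  gcongr
  refine le_trans ?_ (lintegral_mono fun x => lintegral_mono fun y => WL_le hs0 hs1 hper h (x - y))
  unfold WL
  have m1 : Measurable fun p : ((ℝ × ℝ) × (ℝ × ℝ)) × ℝ =>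
      phi s ((p.1.1 - p.1.2).2 + p.2 * (p.1.1 - p.1.2).1) := by fun_prop
  have m2 : Measurable fun p : (ℝ × ℝ) × (ℝ × ℝ) =>
      ∫⁻ u in Icc (-(1/2):ℝ) (1/2), phi s ((p.1 - p.2).2 + u * (p.1 - p.2).1) :=
    m1.lintegral_prod_right'
  have e1 : ∀ x : ℝ × ℝ, ∫⁻ y, ((∫⁻ u in Icc (-(1/2):ℝ) (1/2), phi s ((x - y).2 + u * (x - y).1)) +
      ENNReal.ofReal (11 / 12 * (x - y).1 ^ 2)) ∂μ =
      (∫⁻ y, (∫⁻ u in Icc (-(1/2):ℝ) (1/2), phi s ((x - y).2 + u * (x - y).1)) ∂μ) +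
        ∫⁻ y, ENNReal.ofReal (11 / 12 * (x.1 - y.1) ^ 2) ∂μ := fun x =>
    lintegral_add_left (m2.comp measurable_prodMk_left) _
  simp_rw [e1]
  rw [lintegral_add_left m2.lintegral_prod_right']
  gcongr
  have e2 : ∀ x : ℝ × ℝ,
      ∫⁻ y, (∫⁻ u in Icc (-(1/2):ℝ) (1/2), phi s ((x - y).2 + u * (x - y).1)) ∂μ =
      ∫⁻ u in Icc (-(1/2):ℝ) (1/2), ∫⁻ y, phi s ((x - y).2 + u * (x - y).1) ∂μ := by
    intro x
    exact lintegral_lintegral_swap (by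
      apply Measurable.aemeasurable; unfold Function.uncurry; fun_prop)
  simp_rw [e2]
  have m3 : Measurable fun p : ((ℝ × ℝ) × ℝ) × (ℝ × ℝ) =>
      phi s ((p.1.1 - p.2).2 + p.1.2 * (p.1.1 - p.2).1) := by fun_prop
  rw [lintegral_lintegral_swap (f := fun (x : ℝ × ℝ) (u : ℝ) =>
    ∫⁻ y, phi s ((x - y).2 + u * (x - y).1) ∂μ) m3.lintegral_prod_right'.aemeasurable]
  have e3 : ∀ u : ℝ, FF s (rho1meas s) ≤
      ∫⁻ x, ∫⁻ y, phi s ((x - y).2 + u * (x - y).1) ∂μ ∂μ := by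
    intro u
    let P : ℝ × ℝ → ℝ := fun x => x.2 + u * x.1
    have hP : Measurable P := by fun_prop
    have : IsProbabilityMeasure (μ.map P) := Measure.isProbabilityMeasure_map hP.aemeasurable
    refine (FF_min hs0 hs1 (μ.map P)).1.trans (le_of_eq ?_)
    have m4 : Measurable fun p : ℝ × ℝ => phi s (p.1 - p.2) := by fun_prop
    rw [FF, lintegral_map m4.lintegral_prod_right' hP]
    refine lintegral_congr fun x => ?_
    rw [lintegral_map (by fun_prop) hP]
    refine lintegral_congr fun y => ?_
    congr 1
    simp only [P, Prod.fst_sub, Prod.snd_sub]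
    ring
  refine le_trans ?_ (lintegral_mono fun u => e3 u)
  rw [lintegral_const, Measure.restrict_apply_univ, Real.volume_Icc]
  norm_num

lemma ae_eq_of_lintegral_sq {μ : Measure (ℝ × ℝ)} [IsProbabilityMeasure μ]
    (h : ∫⁻ x, ∫⁻ y, ENNReal.ofReal (11 / 12 * (x.1 - y.1) ^ 2) ∂μ ∂μ = 0) :
    ∀ᵐ x ∂μ, ∀ᵐ y ∂μ, x.1 = y.1 := by
  have m : Measurable fun p : (ℝ × ℝ) × (ℝ × ℝ) => ENNReal.ofReal (11 / 12 * (p.1.1 - p.2.1) ^ 2) := by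
    fun_prop
  rw [lintegral_eq_zero_iff m.lintegral_prod_right'] at h
  filter_upwards [h] with x hx
  have hx' : ∫⁻ y, ENNReal.ofReal (11 / 12 * (x.1 - y.1) ^ 2) ∂μ = 0 := hx
  rw [lintegral_eq_zero_iff (by fun_prop)] at hx'
  filter_upwards [hx'] with y hy
  have hy' : 11 / 12 * (x.1 - y.1) ^ 2 ≤ 0 := ENNReal.ofReal_eq_zero.1 hy
  nlinarith [sq_nonneg (x.1 - y.1)]

/-- Strongly coercive anisotropies force the vertical profile. -/
lemma strong_coercive {s : ℝ} (hs0 : 0 < s) (hs1 : s < 1) {Ω : ℝ → ℝ} (hper : ∀ θ, Ω (θ + π) = Ω θ)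
    (h1 : Ω (π / 2) = 1)
    (h : ∀ θ ∈ Icc (0:ℝ) π, 1 + 16 / (1 - s) * |θ - π / 2| ^ 2 ≤ Ω θ) :
    IsUniqueMinimizer (energy s Ω) (rho1D s) := by
  have hE : energy s Ω (rho1D s) = 1 / 2 * FF s (rho1meas s) := energy_vert s hper h1 0 _
  have hmin : IsMinimizer (energy s Ω) (rho1D s) := by
    refine ⟨isProb_rho1D hs0 hs1, fun μ hμ => ?_⟩
    rw [hE]
    refine le_trans ?_ (energy_ge hs0 hs1 hper h μ)
    gcongr
    exact le_self_add
  refine ⟨hmin, fun μ hμ => ?_⟩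
  have := hμ.1
  have hle := hμ.2 _ hmin.1
  refine vert_unique hs0 hs1 hper h1 (ae_eq_of_lintegral_sq ?_) hle
  have h2 := (energy_ge hs0 hs1 hper h μ).trans hle
  rw [hE, ENNReal.mul_le_mul_iff_right (by simp) (by simp)] at h2
  have h3 := (ENNReal.add_le_add_iff_left (FF_rho1_ne_top hs0 hs1)).1 (h2.trans (add_zero _).ge)
  exact nonpos_iff_eq_zero.1 h3

/-! ### Splitting into two vertical lines -/

/-- The interaction of two points on vertical lines at distance `δ`, without the quadratic part. -/
def GG (s δ τ : ℝ) : ℝ≥0∞ := ENNReal.ofReal ((δ ^ 2 + τ ^ 2) ^ (-(s / 2)))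

@[fun_prop] lemma measurable_GG (s δ : ℝ) : Measurable (GG s δ) := by
  unfold GG; fun_prop

/-- Moving two points of a vertical line to two lines at distance `δ` decreases their repulsion by
at least a multiple of `δ^{-s}` if their signed distance `τ` lies in `(0, δ)`. -/
lemma GG_add_le {s δ : ℝ} (hs0 : 0 < s) (hδ : 0 < δ) (τ : ℝ) :
    GG s δ τ + (Ioo 0 δ).indicator
      (fun _ => ENNReal.ofReal ((1 - 2 ^ (-(s / 2))) * δ ^ (-s))) τ ≤ kk s τ := by
  by_cases h0 : τ = 0
  · rw [kk, if_pos h0]; exact le_top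
  have hτ : 0 < τ ^ 2 := by positivity
  have hk : |τ| ^ (-s) = (τ ^ 2) ^ (-(s / 2)) := by
    rw [← sq_abs, ← Real.rpow_natCast, ← Real.rpow_mul (abs_nonneg _)]
    congr 1; push_cast; ring
  rw [kk, if_neg h0, GG]
  by_cases h : τ ∈ Ioo 0 δ
  · rw [indicator_of_mem h]
    have h2 : (2:ℝ) ^ (-(s / 2)) ≤ 1 := Real.rpow_le_one_of_one_le_of_nonpos (by norm_num) (by linarith)
    rw [← ENNReal.ofReal_add (by positivity) (mul_nonneg (by linarith) (by positivity))]
    apply ENNReal.ofReal_le_ofReal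
    have e1 : (δ ^ 2 + τ ^ 2) ^ (-(s / 2)) ≤ 2 ^ (-(s / 2)) * |τ| ^ (-s) := by
      rw [hk, ← Real.mul_rpow (by norm_num) (by positivity)]
      refine Real.rpow_le_rpow_of_nonpos (by positivity) ?_ (by linarith)
      nlinarith [h.1, h.2]
    have e2 : δ ^ (-s) ≤ |τ| ^ (-s) := by
      rw [abs_of_pos h.1]
      exact Real.rpow_le_rpow_of_nonpos h.1 h.2.le (by linarith)
    nlinarith [mul_le_mul_of_nonneg_left e2 (sub_nonneg.2 h2)]
  · rw [indicator_of_notMem h, add_zero]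
    apply ENNReal.ofReal_le_ofReal
    rw [hk]
    exact Real.rpow_le_rpow_of_nonpos hτ (by nlinarith [sq_nonneg δ]) (by linarith)

/-- The density of `ρ₁` is bounded below away from the ends of its support. -/
lemma rho1meas_ge {s : ℝ} (hs0 : 0 < s) (hs1 : s < 1) :
    ∃ c : ℝ, 0 < c ∧ ∀ u v : ℝ, -(R1 s / 2) ≤ u → v ≤ R1 s / 2 → u ≤ v →
      ENNReal.ofReal (c * (v - u)) ≤ rho1meas s (Ioo u v) := by
  have hR := R1_pos hs0 hs1
  have hC := C1_pos hs0 hs1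
  refine ⟨C1 s * (3 / 4 * R1 s ^ 2) ^ ((1 + s) / 2), by positivity, fun u v hu hv huv => ?_⟩
  rw [rho1meas, withDensity_apply _ measurableSet_Ioo, ENNReal.ofReal_mul (by positivity),
    ← Real.volume_Ioo, ← setLIntegral_const]
  refine setLIntegral_mono (measurable_rho1 s) fun t ht => ?_
  apply ENNReal.ofReal_le_ofReal
  rw [rho1_eq ⟨by linarith [ht.1], by linarith [ht.2]⟩]
  have h1 : t ^ 2 ≤ (R1 s / 2) ^ 2 := sq_le_sq' (by linarith [ht.1]) (by linarith [ht.2])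
  have h2 : 3 / 4 * R1 s ^ 2 ≤ R1 s ^ 2 - t ^ 2 := by nlinarith
  gcongr

/-- The gain from splitting into two lines beats its quadratic cost when `δ` is small. -/
lemma exists_gain {s : ℝ} (hs0 : 0 < s) (hs1 : s < 1) :
    ∃ δ : ℝ, 0 < δ ∧ (∫⁻ t, ∫⁻ t', GG s δ (t - t') ∂(rho1meas s) ∂(rho1meas s)) +
      ENNReal.ofReal (δ ^ 2) < II s (rho1meas s) (rho1meas s) := by
  have hR := R1_pos hs0 hs1
  have := isProb_rho1meas hs0 hs1
  obtain ⟨c, hc, hρ⟩ := rho1meas_ge hs0 hs1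
  have h2 : (2:ℝ) ^ (-(s / 2)) < 1 := Real.rpow_lt_one_of_one_lt_of_neg (by norm_num) (by linarith)
  set b : ℝ := 1 - 2 ^ (-(s / 2)) with hb
  have hb0 : 0 < b := by linarith
  set K : ℝ := b * c * (c * (R1 s / 2)) with hK
  have hK0 : 0 < K := by positivity
  obtain ⟨δ, hδ0, hδ1⟩ : ∃ δ : ℝ, 0 < δ ∧ δ < min (min 1 (R1 s / 2)) K :=
    exists_between (by positivity)
  have hδa : δ < 1 := hδ1.trans_le ((min_le_left _ _).trans (min_le_left _ _))
  have hδb : δ < R1 s / 2 := hδ1.trans_le ((min_le_left _ _).trans (min_le_right _ _))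
  have hδc : δ < K := hδ1.trans_le (min_le_right _ _)
  refine ⟨δ, hδ0, ?_⟩
  have key : (∫⁻ t, ∫⁻ t', GG s δ (t - t') ∂(rho1meas s) ∂(rho1meas s)) +
      ENNReal.ofReal (K * δ ^ (1 - s)) ≤ II s (rho1meas s) (rho1meas s) := by
    have hmi : Measurable ((Ioo 0 δ).indicator (fun _ : ℝ => ENNReal.ofReal (b * δ ^ (-s)))) :=
      measurable_const.indicator measurableSet_Ioo
    have m1 : Measurable fun p : ℝ × ℝ => GG s δ (p.1 - p.2) := by fun_prop
    have m2 : Measurable fun p : ℝ × ℝ => (Ioo 0 δ).indicator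
        (fun _ : ℝ => ENNReal.ofReal (b * δ ^ (-s))) (p.1 - p.2) := hmi.comp (by fun_prop)
    refine le_trans ?_ (lintegral_mono fun t => lintegral_mono fun t' => GG_add_le hs0 hδ0 (t - t'))
    have e1 : ∀ t : ℝ, ∫⁻ t', (GG s δ (t - t') + (Ioo 0 δ).indicator
        (fun _ : ℝ => ENNReal.ofReal (b * δ ^ (-s))) (t - t')) ∂(rho1meas s) =
        (∫⁻ t', GG s δ (t - t') ∂(rho1meas s)) + ∫⁻ t', (Ioo 0 δ).indicator
        (fun _ : ℝ => ENNReal.ofReal (b * δ ^ (-s))) (t - t') ∂(rho1meas s) := fun t =>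
      lintegral_add_left (m1.comp measurable_prodMk_left) _
    rw [← hb]
    simp_rw [e1]
    rw [lintegral_add_left m1.lintegral_prod_right']
    gcongr
    -- for `t ∈ (0, R₁/2)` the mass of `(t - δ, t)` is at least `c δ`
    have e2 : ∀ t : ℝ, (Ioo 0 (R1 s / 2)).indicator
        (fun _ => ENNReal.ofReal (b * δ ^ (-s)) * ENNReal.ofReal (c * δ)) t ≤
        ∫⁻ t', (Ioo 0 δ).indicator
        (fun _ : ℝ => ENNReal.ofReal (b * δ ^ (-s))) (t - t') ∂(rho1meas s) := by
      intro t
      by_cases ht : t ∈ Ioo 0 (R1 s / 2)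
      · rw [indicator_of_mem ht]
        have e3 : ∀ t' : ℝ, (Ioo 0 δ).indicator
            (fun _ : ℝ => ENNReal.ofReal (b * δ ^ (-s))) (t - t') = (Ioo (t - δ) t).indicator
            (fun _ : ℝ => ENNReal.ofReal (b * δ ^ (-s))) t' := by
          intro t'
          have : t - t' ∈ Ioo 0 δ ↔ t' ∈ Ioo (t - δ) t := by
            simp only [mem_Ioo]
            constructor <;> rintro ⟨h, h'⟩ <;> constructor <;> linarith
          by_cases h : t' ∈ Ioo (t - δ) t
          · rw [indicator_of_mem h, indicator_of_mem (this.2 h)]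
          · rw [indicator_of_notMem h, indicator_of_notMem (fun h' => h (this.1 h'))]
        simp_rw [e3]
        rw [lintegral_indicator_const measurableSet_Ioo]
        gcongr
        refine le_trans (le_of_eq ?_) (hρ (t - δ) t (by linarith [ht.1]) ht.2.le (by linarith))
        congr 1; ring
      · rw [indicator_of_notMem ht]; exact zero_le
    refine le_trans ?_ (lintegral_mono e2)
    rw [lintegral_indicator_const measurableSet_Ioo]
    have e4 := hρ 0 (R1 s / 2) (by linarith) le_rfl (by linarith)
    rw [sub_zero] at e4
    refine le_trans (le_of_eq ?_) (mul_le_mul_right e4 _)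
    rw [← ENNReal.ofReal_mul (by positivity), ← ENNReal.ofReal_mul (by positivity)]
    congr 1
    rw [hK, sub_eq_add_neg, Real.rpow_add hδ0, Real.rpow_one]
    ring
  refine lt_of_lt_of_le ?_ key
  have hfin : (∫⁻ t, ∫⁻ t', GG s δ (t - t') ∂(rho1meas s) ∂(rho1meas s)) ≠ ⊤ :=
    ne_top_of_le_ne_top (II_rho1_ne_top hs0 hs1) (le_self_add.trans key)
  refine ENNReal.add_lt_add_left hfin ?_
  rw [ENNReal.ofReal_lt_ofReal_iff (by positivity)]
  have e5 : δ ^ 2 = δ ^ (1 + s) * δ ^ (1 - s) := by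
    rw [← Real.rpow_add hδ0, ← Real.rpow_natCast]
    congr 1; push_cast; ring
  rw [e5]
  refine mul_lt_mul_of_pos_right (lt_of_le_of_lt ?_ hδc) (by positivity)
  conv_rhs => rw [← Real.rpow_one δ]
  exact Real.rpow_le_rpow_of_exponent_ge hδ0 hδa.le (by linarith)

lemma Wkernel_one_apart (s : ℝ) {δ : ℝ} (hδ : δ ≠ 0) (τ : ℝ) :
    Wkernel s (fun _ => 1) (δ, τ) =
      GG s δ τ + ENNReal.ofReal (τ ^ 2) + ENNReal.ofReal (δ ^ 2) := by
  have hx : (δ, τ) ≠ 0 := fun h => hδ (congrArg Prod.fst h)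
  rw [Wkernel, if_neg hx, nrm_rpow, nrm_sq, GG, mul_one, ← ENNReal.ofReal_add (by positivity)
    (by positivity), ← ENNReal.ofReal_add (by positivity) (by positivity)]
  congr 1
  ring

/-- The interaction of two copies of `σ` on vertical lines at distance `|c - c'|`. -/
lemma cross_apart (s : ℝ) {c c' : ℝ} (h : c - c' ≠ 0) (σ : Measure ℝ) [IsProbabilityMeasure σ] :
    ∫⁻ x, ∫⁻ y, Wkernel s (fun _ => 1) (x - y) ∂(Measure.map (fun t => (c', t)) σ)
      ∂(Measure.map (fun t => (c, t)) σ) =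
    (∫⁻ t, ∫⁻ t', GG s (c - c') (t - t') ∂σ ∂σ) + QQ σ + ENNReal.ofReal ((c - c') ^ 2) := by
  rw [(measurableEmbedding_vert c).lintegral_map]
  have e1 : ∀ t : ℝ, ∫⁻ y, Wkernel s (fun _ => 1) ((c, t) - y) ∂(Measure.map (fun t => (c', t)) σ) =
      (∫⁻ t', GG s (c - c') (t - t') ∂σ) + (∫⁻ t', ENNReal.ofReal ((t - t') ^ 2) ∂σ) +
        ENNReal.ofReal ((c - c') ^ 2) := by
    intro t
    rw [(measurableEmbedding_vert c').lintegral_map]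
    simp_rw [Prod.mk_sub_mk, Wkernel_one_apart s h]
    rw [lintegral_add_left (by fun_prop), lintegral_add_left (by fun_prop), lintegral_const,
      measure_univ, mul_one]
  simp_rw [e1]
  have m1 : Measurable fun p : ℝ × ℝ => GG s (c - c') (p.1 - p.2) := by fun_prop
  have m2 : Measurable fun p : ℝ × ℝ => ENNReal.ofReal ((p.1 - p.2) ^ 2) := by fun_prop
  rw [lintegral_add_right _ measurable_const, lintegral_add_left m1.lintegral_prod_right', lintegral_const, measure_univ, mul_one, QQ]

/-- For the isotropic potential, splitting `ρ_{1D}` into two nearby lines lowers the energy. -/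
lemma exists_better {s : ℝ} (hs0 : 0 < s) (hs1 : s < 1) :
    ∃ μ : Measure (ℝ × ℝ), IsProbabilityMeasure μ ∧
      energy s (fun _ => 1) μ < 1 / 2 * FF s (rho1meas s) := by
  have := isProb_rho1meas hs0 hs1
  obtain ⟨δ, hδ, hlt⟩ := exists_gain hs0 hs1
  set σ := rho1meas s
  set B := ∫⁻ t, ∫⁻ t', GG s δ (t - t') ∂σ ∂σ with hB
  let ν : ℝ → Measure (ℝ × ℝ) := fun c => Measure.map (fun t => (c, t)) σ
  have hν : ∀ c, IsProbabilityMeasure (ν c) := fun c =>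
    Measure.isProbabilityMeasure_map (by fun_prop)
  refine ⟨(2⁻¹ : ℝ≥0∞) • ν 0 + (2⁻¹ : ℝ≥0∞) • ν δ, ⟨?_⟩, ?_⟩
  · have h0 := (hν 0).measure_univ
    have h1 := (hν δ).measure_univ
    simp [h0, h1, ENNReal.inv_two_add_inv_two]
  have hW : Measurable (Wkernel s fun _ => 1) := measurable_Wkernel s measurable_const
  have m : Measurable fun p : (ℝ × ℝ) × (ℝ × ℝ) => Wkernel s (fun _ => 1) (p.1 - p.2) := by fun_prop
  have self : ∀ c, ∫⁻ x, ∫⁻ y, Wkernel s (fun _ => 1) (x - y) ∂(ν c) ∂(ν c) = FF s σ := by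
    intro c
    have := energy_vert s (Ω := fun _ => 1) (fun _ => rfl) rfl c σ
    rw [energy] at this
    exact (ENNReal.mul_right_inj (by simp) (by simp)).1 this
  have c1 : ∫⁻ x, ∫⁻ y, Wkernel s (fun _ => 1) (x - y) ∂(ν 0) ∂(ν δ) =
      B + QQ σ + ENNReal.ofReal (δ ^ 2) := by
    have := cross_apart s (c := δ) (c' := 0) (by simpa using hδ.ne') σ
    rwa [sub_zero] at this
  have c2 : ∫⁻ x, ∫⁻ y, Wkernel s (fun _ => 1) (x - y) ∂(ν δ) ∂(ν 0) =
      B + QQ σ + ENNReal.ofReal (δ ^ 2) := by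
    have := cross_apart s (c := 0) (c' := δ) (by simpa using hδ.ne') σ
    rw [zero_sub, neg_sq] at this
    rw [this, hB]
    simp only [GG, neg_sq]
  rw [energy]
  refine (ENNReal.mul_lt_mul_iff_right (by simp) (by simp)).2 ?_
  simp_rw [lintegral_add_measure, lintegral_smul_measure, smul_eq_mul]
  have mm : ∀ c, Measurable fun x => 2⁻¹ * ∫⁻ y, Wkernel s (fun _ => 1) (x - y) ∂(ν c) := fun c =>
    Measurable.const_mul m.lintegral_prod_right' _
  rw [lintegral_add_left (mm 0), lintegral_add_left (mm 0), lintegral_const_mul _ m.lintegral_prod_right',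
    lintegral_const_mul _ m.lintegral_prod_right', lintegral_const_mul _ m.lintegral_prod_right',
    lintegral_const_mul _ m.lintegral_prod_right', self, self, c1, c2]
  have hF : FF s σ ≠ ⊤ := FF_rho1_ne_top hs0 hs1
  have hX : B + QQ σ + ENNReal.ofReal (δ ^ 2) < FF s σ := by
    rw [FF_eq_add, add_right_comm]
    refine ENNReal.add_lt_add_right ?_ hlt
    rw [FF_eq_add] at hF
    exact (ENNReal.add_ne_top.1 hF).2
  set X := B + QQ σ + ENNReal.ofReal (δ ^ 2)
  set Y := FF s σ
  have hXt : X ≠ ⊤ := hX.ne_top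
  calc (2⁻¹ : ℝ≥0∞) * (2⁻¹ * Y + 2⁻¹ * X) + 2⁻¹ * (2⁻¹ * X + 2⁻¹ * Y)
      = (2⁻¹ + 2⁻¹) * (2⁻¹ * Y + 2⁻¹ * X) := by ring
    _ = 2⁻¹ * Y + 2⁻¹ * X := by rw [ENNReal.inv_two_add_inv_two, one_mul]
    _ < 2⁻¹ * Y + 2⁻¹ * Y := by
        refine ENNReal.add_lt_add_left (ENNReal.mul_ne_top (by simp) hF) ?_
        exact (ENNReal.mul_lt_mul_iff_right (by simp) (by simp)).2 hX
    _ = Y := by rw [← add_mul, ENNReal.inv_two_add_inv_two, one_mul]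

/-! ### Dependence on the parameter `α` -/

lemma bounded_of_h {ω : ℝ → ℝ} (hω : Satisfiesh ω) : ∃ M : ℝ, 0 < M ∧ ∀ θ, ω θ ≤ M := by
  have hc : Continuous ω := hω.1.continuous
  have hper : Function.Periodic ω π := hω.2.2.2.2.1
  obtain ⟨M, hM⟩ := (isCompact_Icc (a := (0:ℝ)) (b := 0 + π)).bddAbove_image hc.continuousOn
  refine ⟨max M 1, by positivity, fun θ => ?_⟩
  obtain ⟨y, hy, hyθ⟩ := hper.exists_mem_Ico Real.pi_pos θ 0
  rw [hyθ]
  exact (hM ⟨y, ⟨hy.1, hy.2.le⟩, rfl⟩).trans (le_max_left _ _)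

/-- Increasing `α` preserves minimality of `ρ_{1D}` and makes it unique: the energy gained is
nonnegative, vanishes at `ρ_{1D}`, and vanishes only for measures on vertical lines. -/
lemma family_mono {s : ℝ} (hs0 : 0 < s) (hs1 : s < 1) {ω : ℝ → ℝ} (hω : Satisfiesh ω) {cω : ℝ}
    (hcω : 0 < cω) (h : ∀ θ ∈ Icc (0:ℝ) π, cω * |θ - π / 2| ^ 2 ≤ ω θ) {α₀ α : ℝ} (hα₀ : 0 < α₀)
    (hα : α₀ < α) (hmin : IsMinimizer (energy s fun θ => 1 + α₀ * ω θ) (rho1D s)) :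
    IsUniqueMinimizer (energy s fun θ => 1 + α * ω θ) (rho1D s) := by
  obtain ⟨hsm, -, hnn, -, hper, hz⟩ := hω
  have hp : ∀ β θ : ℝ, 1 + β * ω (θ + π) = 1 + β * ω θ := fun β θ => by rw [hper]
  have hE : ∀ β, energy s (fun θ => 1 + β * ω θ) (rho1D s) = 1 / 2 * FF s (rho1meas s) := fun β =>
    energy_vert s (hp β) (by rw [hz, mul_zero, add_zero]) 0 _
  have hωm : Measurable ω := hsm.continuous.measurable
  let D : ℝ × ℝ → ℝ≥0∞ := fun x => ENNReal.ofReal (nrm x ^ (-s) * ((α - α₀) * ω (ang x)))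
  have mD : Measurable D := by fun_prop
  have hle : ∀ x, Wkernel s (fun θ => 1 + α₀ * ω θ) x + D x ≤ Wkernel s (fun θ => 1 + α * ω θ) x := by
    intro x
    by_cases hx : x = 0
    · rw [Wkernel, Wkernel, if_pos hx, if_pos hx]; exact le_top
    have hN : 0 ≤ nrm x := Real.sqrt_nonneg _
    have hn := hnn (ang x)
    have hd : 0 ≤ α - α₀ := by linarith
    rw [Wkernel, Wkernel, if_neg hx, if_neg hx, ← ENNReal.ofReal_add (by positivity) (by positivity)]
    apply ENNReal.ofReal_le_ofReal (le_of_eq (by ring))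
  have mW : Measurable fun p : (ℝ × ℝ) × (ℝ × ℝ) => Wkernel s (fun θ => 1 + α₀ * ω θ) (p.1 - p.2) :=
    (measurable_Wkernel s (by fun_prop)).comp (by fun_prop)
  have mD2 : Measurable fun p : (ℝ × ℝ) × (ℝ × ℝ) => D (p.1 - p.2) := by fun_prop
  have hEle : ∀ μ : Measure (ℝ × ℝ), IsProbabilityMeasure μ →
      energy s (fun θ => 1 + α₀ * ω θ) μ + 1 / 2 * ∫⁻ x, ∫⁻ y, D (x - y) ∂μ ∂μ ≤
        energy s (fun θ => 1 + α * ω θ) μ := by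
    intro μ hμ
    rw [energy, energy, ← mul_add]
    gcongr
    refine le_trans (le_of_eq ?_) (lintegral_mono fun x => lintegral_mono fun y => hle (x - y))
    have e1 : ∀ x : ℝ × ℝ, ∫⁻ y, (Wkernel s (fun θ => 1 + α₀ * ω θ) (x - y) + D (x - y)) ∂μ =
        (∫⁻ y, Wkernel s (fun θ => 1 + α₀ * ω θ) (x - y) ∂μ) + ∫⁻ y, D (x - y) ∂μ := fun x =>
      lintegral_add_left (mW.comp measurable_prodMk_left) _
    simp_rw [e1]
    rw [lintegral_add_left mW.lintegral_prod_right']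
  have hmin' : IsMinimizer (energy s fun θ => 1 + α * ω θ) (rho1D s) := by
    refine ⟨hmin.1, fun μ hμ => ?_⟩
    rw [hE, ← hE α₀]
    exact (hmin.2 μ hμ).trans (le_self_add.trans (hEle μ hμ))
  refine ⟨hmin', fun μ hμ => ?_⟩
  have hpμ := hμ.1
  have hle2 := hμ.2 _ hmin.1
  refine vert_unique hs0 hs1 (hp α) (by rw [hz, mul_zero, add_zero]) ?_ hle2
  have hfin : energy s (fun θ => 1 + α₀ * ω θ) (rho1D s) ≠ ⊤ := by
    rw [hE]; exact ENNReal.mul_ne_top (by simp) (FF_rho1_ne_top hs0 hs1)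
  have h3 : energy s (fun θ => 1 + α₀ * ω θ) (rho1D s) + 1 / 2 * ∫⁻ x, ∫⁻ y, D (x - y) ∂μ ∂μ ≤
      energy s (fun θ => 1 + α₀ * ω θ) (rho1D s) + 0 := by
    rw [add_zero]
    calc _ ≤ _ := add_le_add_left (hmin.2 μ hpμ) _
      _ ≤ _ := hEle μ hpμ
      _ ≤ _ := hle2
      _ = _ := by rw [hE, hE]
  have h4 := nonpos_iff_eq_zero.1 ((ENNReal.add_le_add_iff_left hfin).1 h3)
  have h5 : ∫⁻ x, ∫⁻ y, D (x - y) ∂μ ∂μ = 0 := by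
    rcases mul_eq_zero.1 h4 with h | h
    · simp at h
    · exact h
  rw [lintegral_eq_zero_iff mD2.lintegral_prod_right'] at h5
  filter_upwards [h5] with x hx
  have hx' : ∫⁻ y, D (x - y) ∂μ = 0 := hx
  rw [lintegral_eq_zero_iff (by fun_prop)] at hx'
  filter_upwards [hx'] with y hy
  have hy' : nrm (x - y) ^ (-s) * ((α - α₀) * ω (ang (x - y))) ≤ 0 := ENNReal.ofReal_eq_zero.1 hy
  by_contra hne
  have hd1 : (x - y).1 ≠ 0 := sub_ne_zero.2 hne
  have hd : x - y ≠ 0 := fun h0 => hd1 (congrArg Prod.fst h0)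
  have hN := sq_add_sq_pos hd
  have hcoer := coercive_ang (A := 0) hcω.le hper (fun θ hθ => by simpa using h θ hθ) hd
  have hpos : 0 < ω (ang (x - y)) := lt_of_lt_of_le (by positivity) hcoer
  have hNn : 0 < nrm (x - y) := Real.sqrt_pos.2 hN
  have hda : 0 < α - α₀ := by linarith
  have : 0 < nrm (x - y) ^ (-s) * ((α - α₀) * ω (ang (x - y))) := by positivity
  linarith

/-- For small `α` the measure `ρ_{1D}` is not a minimizer: the competitor beating it for `α = 0` still does,
because `W_α ≤ (1 + α M) W_0` when `ω ≤ M`. -/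
lemma small_alpha {s : ℝ} (hs0 : 0 < s) (hs1 : s < 1) {ω : ℝ → ℝ} (hω : Satisfiesh ω) :
    ∃ a : ℝ, 0 < a ∧ ∀ α : ℝ, 0 < α → α ≤ a →
      ¬ IsMinimizer (energy s fun θ => 1 + α * ω θ) (rho1D s) := by
  obtain ⟨M, hM0, hM⟩ := bounded_of_h hω
  obtain ⟨-, -, hnn, -, hper, hz⟩ := hω
  obtain ⟨μ, hμ, hlt⟩ := exists_better hs0 hs1
  have hFt : 1 / 2 * FF s (rho1meas s) ≠ ⊤ := ENNReal.mul_ne_top (by simp) (FF_rho1_ne_top hs0 hs1)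
  obtain ⟨f, hf⟩ : ∃ f : ℝ, f = (1 / 2 * FF s (rho1meas s)).toReal := ⟨_, rfl⟩
  obtain ⟨e, he⟩ : ∃ e : ℝ, e = (energy s (fun _ => 1) μ).toReal := ⟨_, rfl⟩
  have he0 : 0 ≤ e := by rw [he]; exact ENNReal.toReal_nonneg
  have hef : e < f := by rw [he, hf]; exact (ENNReal.toReal_lt_toReal hlt.ne_top hFt).2 hlt
  refine ⟨(f - e) / (2 * (M * e + 1)), div_pos (by linarith) (by positivity), fun α hα hαa hmin => ?_⟩
  have hp : ∀ θ : ℝ, 1 + α * ω (θ + π) = 1 + α * ω θ := fun θ => by rw [hper]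
  have hE : energy s (fun θ => 1 + α * ω θ) (rho1D s) = 1 / 2 * FF s (rho1meas s) :=
    energy_vert s hp (by rw [hz, mul_zero, add_zero]) 0 _
  have hW : ∀ x, Wkernel s (fun θ => 1 + α * ω θ) x ≤
      ENNReal.ofReal (1 + α * M) * Wkernel s (fun _ => 1) x := by
    intro x
    have hpos : 0 < 1 + α * M := by positivity
    by_cases hx : x = 0
    · rw [Wkernel, Wkernel, if_pos hx, if_pos hx, ENNReal.mul_top (by simpa using hpos)]
    rw [Wkernel, Wkernel, if_neg hx, if_neg hx, ← ENNReal.ofReal_mul hpos.le]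
    apply ENNReal.ofReal_le_ofReal
    have hN : 0 ≤ nrm x := Real.sqrt_nonneg _
    have h1 : nrm x ^ (-s) * (1 + α * ω (ang x)) ≤ nrm x ^ (-s) * (1 + α * M) := by
      have := hM (ang x)
      gcongr
    have h2 : 0 ≤ α * M * nrm x ^ 2 := by positivity
    nlinarith
  have hle : energy s (fun θ => 1 + α * ω θ) μ ≤
      ENNReal.ofReal (1 + α * M) * energy s (fun _ => 1) μ := by
    rw [energy, energy, mul_left_comm]
    gcongr
    rw [← lintegral_const_mul' _ _ ENNReal.ofReal_ne_top]
    refine lintegral_mono fun x => ?_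
    rw [← lintegral_const_mul' _ _ ENNReal.ofReal_ne_top]
    exact lintegral_mono fun y => hW (x - y)
  have h3 := (hmin.2 μ hμ).trans hle
  rw [hE] at h3
  have h4 := ENNReal.toReal_mono (ENNReal.mul_ne_top ENNReal.ofReal_ne_top hlt.ne_top) h3
  rw [← hf, ENNReal.toReal_mul, ENNReal.toReal_ofReal (by positivity), ← he] at h4
  rw [le_div_iff₀ (by positivity)] at hαa
  nlinarith

/-! ### The threshold -/

/-- existence of a constant `C*(s)` such that strongly coercive anisotropies
force `ρ_{1D}` to be the unique minimizer, and for parametrized potentials `W_α` there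
is a sharp threshold `α* ∈ (0, C*/c_ω]`. -/
theorem statement9 (s : ℝ) (hs0 : 0 < s) (hs1 : s < 1) :
    ∃ Cstar : ℝ, 0 < Cstar ∧
      (∀ Ω : ℝ → ℝ, SatisfiesH Ω → Ω (π / 2) = 1 →
        (∀ θ ∈ Set.Icc (0 : ℝ) π, 1 + Cstar * |θ - π / 2| ^ 2 ≤ Ω θ) →
        IsUniqueMinimizer (energy s Ω) (rho1D s)) ∧
      (∀ ω : ℝ → ℝ, Satisfiesh ω → ∀ cω : ℝ, 0 < cω →
        (∀ θ ∈ Set.Icc (0 : ℝ) π, cω * |θ - π / 2| ^ 2 ≤ ω θ) →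
        ∃! αs : ℝ, (0 < αs ∧ αs ≤ Cstar / cω) ∧
          (∀ α : ℝ, αs < α →
            IsUniqueMinimizer (energy s fun θ => 1 + α * ω θ) (rho1D s)) ∧
          (∀ α : ℝ, 0 < α → α < αs →
            ¬ IsMinimizer (energy s fun θ => 1 + α * ω θ) (rho1D s))) := by
  have h1s : 0 < 1 - s := by linarith
  refine ⟨16 / (1 - s), by positivity,
    fun Ω hH h1 h => strong_coercive hs0 hs1 hH.2.2.2 h1 h, fun ω hω cω hcω hcoer => ?_⟩
  let S : Set ℝ := {α | 0 < α ∧ IsMinimizer (energy s fun θ => 1 + α * ω θ) (rho1D s)}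
  have hS : 16 / (1 - s) / cω ∈ S := by
    refine ⟨by positivity, (strong_coercive hs0 hs1 ?_ ?_ fun θ hθ => ?_).1⟩
    · intro θ
      rw [hω.2.2.2.2.1]
    · rw [hω.2.2.2.2.2, mul_zero, add_zero]
    · have h1 := mul_le_mul_of_nonneg_left (hcoer θ hθ) (by positivity : 0 ≤ 16 / (1 - s) / cω)
      rw [← mul_assoc, div_mul_cancel₀ _ hcω.ne'] at h1
      linarith
  obtain ⟨a, ha0, ha⟩ := small_alpha hs0 hs1 hω
  have hlb : ∀ α ∈ S, a ≤ α := fun α hα => by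
    by_contra! h
    exact ha α hα.1 h.le hα.2
  have hbdd : BddBelow S := ⟨a, hlb⟩
  refine ⟨sInf S, ⟨⟨ha0.trans_le (le_csInf ⟨_, hS⟩ hlb), csInf_le hbdd hS⟩, fun α hα => ?_,
    fun α hα0 hα hmin => ?_⟩, ?_⟩
  · obtain ⟨α₀, hα₀, hlt⟩ := exists_lt_of_csInf_lt ⟨_, hS⟩ hα
    exact family_mono hs0 hs1 hω hcω hcoer hα₀.1 hlt hα₀.2
  · exact absurd (csInf_le hbdd (show α ∈ S from ⟨hα0, hmin⟩)) (not_le.2 hα)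
  · rintro b ⟨⟨hb0, -⟩, hb1, hb2⟩
    refine le_antisymm ?_ ?_
    · refine le_csInf ⟨_, hS⟩ fun α hα => ?_
      by_contra! h
      exact hb2 α hα.1 h hα.2
    · refine le_of_forall_gt fun α hα => ?_
      obtain ⟨α', h1, h2⟩ := exists_between hα
      exact (csInf_le hbdd (show α' ∈ S from ⟨hb0.trans h1, (hb1 α' h1).1⟩)).trans_lt h2

end Aniso
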